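/- Let S ⊆ ℝⁿ (n ≥ 2) be a d-set with n−1 < d < n, let 1 < p < ∞, 1 ≤ q < ∞ and s > (n−d)/p. Then there is a constant c > 0 (depending on n, d, p, q, s and S) such that for every f ∈ F^s_{pq}(ℝⁿ) whose trace satisfies Tr_S f = 0 ℋᵈ-almost everywhere on S, one has (∫_{ℝⁿ} |f(x)|^p / dist(x,S)^{sp} dx)^{1/p} ≤ c ‖f‖_{F^s_{pq}(ℝⁿ)}. -/

import Mathlib

open MeasureTheory Metric Set Filter
open scoped ENNReal NNReal Topology

noncomputable section

/-- ℝⁿ, with the sup-norm (given by the product metric on `Fin n → ℝ`). -/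
abbrev Rn (n : ℕ) := Fin n → ℝ

/-- `S` is an (Ahlfors) `d`-set with regularity constant `C`. -/
def IsDSet {n : ℕ} (S : Set (Rn n)) (d C : ℝ) : Prop :=
  IsClosed S ∧ 1 < C ∧ ∀ w ∈ S, ∀ r : ℝ, 0 < r → r ≤ 1 →
    ENNReal.ofReal (C⁻¹ * r ^ d) ≤ μH[d] (closedBall w r ∩ S) ∧
      μH[d] (closedBall w r ∩ S) ≤ ENNReal.ofReal (C * r ^ d)

/-- `Tr_S f = 0` pointwise ℋᵈ-almost everywhere on `S`. -/
def TraceZero {n : ℕ} (S : Set (Rn n)) (d : ℝ) (f : Rn n → ℝ) : Prop :=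
  ∀ᵐ x ∂(μH[d]).restrict S,
    Tendsto (fun r : ℝ => ⨍ y in closedBall x r, f y) (𝓝[>] 0) (𝓝 0)

/-- The normalized local best approximation `ℰ_k(f, Q(x,r))_{L^u}`: the infimum over
polynomials `P` of degree at most `k-1` of `((1/|Q|) ∫_Q |f − P|^u)^{1/u}`. -/
def localApprox {n : ℕ} (k : ℕ) (u : ℝ) (f : Rn n → ℝ) (x : Rn n) (r : ℝ) : ℝ≥0∞ :=
  ⨅ (P : MvPolynomial (Fin n) ℝ) (_ : P.totalDegree ≤ k - 1),
    ((volume (closedBall x r))⁻¹ *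
      ∫⁻ y in closedBall x r, ENNReal.ofReal |f y - MvPolynomial.eval y P| ^ u) ^ (1 / u)

/-- The Triebel–Lizorkin norm `‖f‖_{F^s_{pq}} = ‖f‖_{L^p} + ‖g‖_{L^p}` with
`g(x) = (∫₀¹ (t^{−s} ℰ_k(f,Q(x,t))_{L¹})^q dt/t)^{1/q}` and `k = [s]+1`. -/
def tlNorm {n : ℕ} (s p q : ℝ) (f : Rn n → ℝ) : ℝ≥0∞ :=
  (∫⁻ x, ENNReal.ofReal |f x| ^ p) ^ (1 / p) +
  (∫⁻ x, ((∫⁻ t in Set.Ioo (0:ℝ) 1,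
      (ENNReal.ofReal (t ^ (-s)) * localApprox (⌊s⌋₊ + 1) 1 f x t) ^ q
        * ENNReal.ofReal t⁻¹) ^ (1 / q)) ^ p) ^ (1 / p)

/-- The left hand side of the Hardy inequality, with distance in the sup-norm. -/
def hardyLHS {n : ℕ} (S : Set (Rn n)) (s p : ℝ) (f : Rn n → ℝ) : ℝ≥0∞ :=
  (∫⁻ x, ENNReal.ofReal (|f x| ^ p / infDist x S ^ (s * p))) ^ (1 / p)

/-! The zero set of a nonzero polynomial has dimension at most `n - 1 < d`, so it is null for the
measure `μ = ℋᵈ` on `S`. By compactness this improves to a Remez inequality, uniform over `w ∈ S`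
and `0 < r ≤ 1`: for polynomials of bounded degree, `sup |P| ≤ C r⁻ᵈ ∫ |P| dμ`, with both sides
taken over `Q(w, r)`.

Let `hⱼ` be the dyadic scales, `Eⱼ` the local best approximation of `f` at scale `hⱼ`, and
`Fⱼ = ∑_{i ≥ j} Eᵢ`. Telescoping near-best polynomials and using that the trace of `f` vanishes,
the Remez inequality gives `|f(x)| ≤ C (Fⱼ(x) + hⱼ⁻ᵈ ∫_{Q(x, 2hⱼ)} Fⱼ dμ)` if `dist(x, S) ≤ hⱼ`.

Let `γ = sp - (n - d) > 0` and `G = supⱼ hⱼ⁻ˢ Eⱼ`. By Hölder and Tonelli the second term contributes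
at most `C ∑ⱼ hⱼ^{-γ} ∫ Fⱼᵖ dμ` to the Hardy integral, and the discrete Hardy inequality replaces
`Fⱼ` by `Eⱼ`. As `d < n`, `S` is porous, so `∫ Eⱼᵖ dμ` is bounded by `hⱼ^{d-n}` times the Lebesgue
integral of `Eⱼᵖ` over the shell `h_{j+M} ≤ dist(x, S) ≤ hⱼ`. There `hⱼ⁻ˢ Eⱼ ≤ G`, the shells
overlap boundedly, and the sum is at most `C ∫ Gᵖ`. -/

section ZeroSets

open Module

section LevelSets

variable {E F : Type*} [NormedAddCommGroup E] [NormedSpace ℝ E] [FiniteDimensional ℝ E]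
  [NormedAddCommGroup F] [NormedSpace ℝ F] [FiniteDimensional ℝ F]

lemma exists_nhds_dimH_inter_fiber_le {f : E → F} {f' : E →L[ℝ] F} {a : E}
    (hf : HasStrictFDerivAt f f' a) (hsurj : f'.range = ⊤) :
    ∃ t ∈ 𝓝 a, dimH (t ∩ f ⁻¹' {f a}) ≤ finrank ℝ f'.ker := by
  have : CompleteSpace E := FiniteDimensional.complete ℝ E
  set φ := hf.implicitFunction f f' hsurj (f a)
  let π : E → f'.ker := fun x => (hf.implicitToOpenPartialHomeomorph f f' hsurj x).2
  obtain ⟨K, u, hu, hφu⟩ : ∃ K : ℝ≥0, ∃ u ∈ 𝓝 0, LipschitzOnWith K φ u :=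
    (hf.to_implicitFunction hsurj).exists_lipschitzOnWith
  have hπ : Tendsto π (𝓝 a) (𝓝 0) := by
    have h := (hf.implicitToOpenPartialHomeomorph f f' hsurj).continuousAt
      (hf.mem_implicitToOpenPartialHomeomorph_source hsurj)
    simpa [π, Function.comp_def] using (continuous_snd.tendsto _).comp h.tendsto
  refine ⟨{x | hf.implicitFunction f f' hsurj (f x) (π x) = x ∧ π x ∈ u},
    (hf.eq_implicitFunction hsurj).and (hπ hu), ?_⟩
  have hsub : {x | hf.implicitFunction f f' hsurj (f x) (π x) = x ∧ π x ∈ u} ∩ f ⁻¹' {f a} ⊆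
      φ '' u := by
    rintro x ⟨⟨hx, hxu⟩, hfx : f x = f a⟩
    exact ⟨π x, hxu, by rwa [hfx] at hx⟩
  calc dimH _ ≤ dimH (φ '' u) := dimH_mono hsub
    _ ≤ dimH u := hφu.dimH_image_le
    _ ≤ dimH univ := dimH_mono (subset_univ u)
    _ = finrank ℝ f'.ker := Real.dimH_univ_eq_finrank _

lemma dimH_regular_fiber_le {f : E → F} {f' : E → E →L[ℝ] F}
    (hf : ∀ x, HasStrictFDerivAt f (f' x) x) (c : F) :
    dimH {x | f x = c ∧ (f' x).range = ⊤} ≤ (finrank ℝ E - finrank ℝ F : ℕ) := by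
  by_contra! hlt
  obtain ⟨a, ⟨rfl, ha⟩, hdim⟩ := exists_mem_nhdsWithin_lt_dimH_of_lt_dimH hlt
  obtain ⟨t, ht, hle⟩ := exists_nhds_dimH_inter_fiber_le (hf a) ha
  have hker : finrank ℝ (f' a).ker = finrank ℝ E - finrank ℝ F := by
    have h := (f' a).toLinearMap.finrank_range_add_finrank_ker
    rw [ha, finrank_top] at h
    exact (Nat.sub_eq_of_eq_add' h.symm).symm
  refine (hdim _ (inter_mem_nhdsWithin _ ht)).not_ge (le_trans (dimH_mono ?_) (hker ▸ hle))
  exact fun x hx => ⟨hx.2, hx.1.1⟩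

end LevelSets

variable {ι : Type*} [Fintype ι]

lemma hasStrictFDerivAt_eval (P : MvPolynomial ι ℝ) (x : ι → ℝ) :
    HasStrictFDerivAt (fun y => MvPolynomial.eval y P)
      (∑ i, MvPolynomial.eval x (MvPolynomial.pderiv i P) •
        (ContinuousLinearMap.proj i : (ι → ℝ) →L[ℝ] ℝ)) x := by
  classical
  induction P using MvPolynomial.induction_on with
  | C a => simpa using hasStrictFDerivAt_const a x
  | add p q hp hq =>
    simp only [map_add, add_smul, Finset.sum_add_distrib]
    exact hp.add hq
  | mul_X p i hp =>
    have hXi : HasStrictFDerivAt (fun y : ι → ℝ => y i)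
        (ContinuousLinearMap.proj i : (ι → ℝ) →L[ℝ] ℝ) x :=
      hasStrictFDerivAt_apply i x
    simp only [map_mul, MvPolynomial.eval_X]
    refine (hp.mul hXi).congr_fderiv (ContinuousLinearMap.ext fun v => ?_)
    simp only [Derivation.leibniz, MvPolynomial.pderiv_X, Pi.single_apply, smul_eq_mul, map_add,
      map_mul, MvPolynomial.eval_X, _root_.sum_apply, _root_.add_apply, _root_.smul_apply,
      ContinuousLinearMap.proj_apply, add_mul, Finset.sum_add_distrib, Finset.mul_sum, mul_assoc]
    simp [apply_ite]

lemma totalDegree_pderiv_le {R σ : Type*} [CommSemiring R] (P : MvPolynomial σ R) (i : σ) :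
    (MvPolynomial.pderiv i P).totalDegree ≤ P.totalDegree - 1 := by
  refine Finset.sup_le fun b hb => ?_
  rw [MvPolynomial.mem_support_iff, MvPolynomial.coeff_pderiv] at hb
  have hdeg := MvPolynomial.le_totalDegree (p := P) (s := b + Finsupp.single i 1)
    (by rw [MvPolynomial.mem_support_iff]; intro h0; simp [h0] at hb)
  rw [Finsupp.sum_add_index' (fun _ => rfl) (fun _ _ _ => rfl), Finsupp.sum_single_index rfl]
    at hdeg
  exact Nat.le_sub_one_of_lt hdeg

lemma eq_C_of_forall_pderiv_eq_zero {σ : Type*} [Finite σ] {P : MvPolynomial σ ℝ}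
    (hP : ∀ i, MvPolynomial.pderiv i P = 0) : P = MvPolynomial.C (MvPolynomial.eval 0 P) := by
  have := Fintype.ofFinite σ
  refine MvPolynomial.funext fun x => ?_
  rw [MvPolynomial.eval_C]
  refine is_const_of_fderiv_eq_zero (𝕜 := ℝ) (f := fun y => MvPolynomial.eval y P)
    (fun z => (hasStrictFDerivAt_eval P z).hasFDerivAt.differentiableAt) (fun z => ?_) x 0
  rw [(hasStrictFDerivAt_eval P z).hasFDerivAt.fderiv]
  simp [hP]

lemma dimH_eval_eq_zero_pderiv_ne_zero_le (P : MvPolynomial ι ℝ) (i : ι) :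
    dimH {x | MvPolynomial.eval x P = 0 ∧ MvPolynomial.eval x (MvPolynomial.pderiv i P) ≠ 0} ≤
      (Fintype.card ι - 1 : ℕ) := by
  classical
  have h := dimH_regular_fiber_le (hasStrictFDerivAt_eval P) 0
  rw [finrank_fintype_fun_eq_card, finrank_self] at h
  refine (dimH_mono ?_).trans h
  rintro x ⟨hx, hxi⟩
  refine ⟨hx, LinearMap.range_eq_top.2 (LinearMap.surjective fun h0 => hxi ?_)⟩
  simpa [Pi.single_apply] using LinearMap.congr_fun h0 (Pi.single i 1)

lemma dimH_eval_eq_zero_le {P : MvPolynomial ι ℝ} (hP : P ≠ 0) :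
    dimH {x | MvPolynomial.eval x P = 0} ≤ (Fintype.card ι - 1 : ℕ) := by
  induction hN : P.totalDegree using Nat.strong_induction_on generalizing P with
  | _ N ih =>
  subst hN
  by_cases hconst : ∀ i, MvPolynomial.pderiv i P = 0
  · rw [eq_C_of_forall_pderiv_eq_zero hconst] at hP ⊢
    simp_all
  obtain ⟨i, hi⟩ := not_forall.1 hconst
  have hdeg : P.totalDegree ≠ 0 := by
    intro h0
    rw [MvPolynomial.totalDegree_eq_zero_iff_eq_C] at h0
    exact hi (by rw [h0, MvPolynomial.pderiv_C])
  have hlt := (totalDegree_pderiv_le P i).trans_lt (Nat.sub_one_lt hdeg)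
  refine (dimH_mono fun x hx => ?_).trans ((dimH_union _ _).trans_le
    (max_le (dimH_eval_eq_zero_pderiv_ne_zero_le P i) (ih _ hlt hi rfl)))
  by_cases hxi : MvPolynomial.eval x (MvPolynomial.pderiv i P) = 0
  exacts [Or.inr hxi, Or.inl ⟨hx, hxi⟩]

lemma hausdorffMeasure_eval_eq_zero {d : ℝ} (hd : (Fintype.card ι : ℝ) - 1 < d) (hd0 : 0 < d)
    {P : MvPolynomial ι ℝ} (hP : P ≠ 0) : μH[d] {x | MvPolynomial.eval x P = 0} = 0 := by
  lift d to ℝ≥0 using hd0.le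
  refine hausdorffMeasure_of_dimH_lt ((dimH_eval_eq_zero_le hP).trans_lt ?_)
  have : ((Fintype.card ι - 1 : ℕ) : ℝ≥0) < d := by
    rw [← NNReal.coe_lt_coe, NNReal.coe_natCast]
    rcases Nat.eq_zero_or_pos (Fintype.card ι) with h | h
    · simpa [h] using hd0
    · rwa [Nat.cast_sub h, Nat.cast_one]
  exact_mod_cast this

end ZeroSets

section Covers

lemma add_rpow_le_two_rpow_mul {r : ℝ} (hr : 0 ≤ r) (x y : ℝ≥0∞) :
    (x + y) ^ r ≤ 2 ^ r * (x ^ r + y ^ r) :=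
  calc (x + y) ^ r ≤ (2 * max x y) ^ r := by
        gcongr
        exact (add_le_add (le_max_left x y) (le_max_right x y)).trans_eq (two_mul _).symm
    _ = 2 ^ r * max (x ^ r) (y ^ r) := by
        rw [ENNReal.mul_rpow_of_nonneg _ _ hr, (ENNReal.monotone_rpow_of_nonneg hr).map_max]
    _ ≤ 2 ^ r * (x ^ r + y ^ r) := by
        gcongr
        exact max_le le_self_add le_add_self

lemma exists_cover_tsum_ediam_rpow_lt {X : Type*} [EMetricSpace X] [MeasurableSpace X]
    [BorelSpace X] {d : ℝ} {s : Set X} (hs : μH[d] s = 0) {δ η : ℝ≥0∞} (hδ : 0 < δ) (hη : η ≠ 0) :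
    ∃ t : ℕ → Set X, s ⊆ ⋃ i, t i ∧ (∀ i, ediam (t i) ≤ δ) ∧
      ∑' i, ⨆ _ : (t i).Nonempty, ediam (t i) ^ d < η := by
  have hlt : μH[d] s < η := hs ▸ pos_iff_ne_zero.2 hη
  rw [Measure.hausdorffMeasure_apply] at hlt
  simpa only [iInf_lt_iff, exists_prop] using
    (le_iSup₂ (f := fun (r : ℝ≥0∞) (_ : 0 < r) ↦ ⨅ (t : ℕ → Set X) (_ : s ⊆ ⋃ n, t n)
      (_ : ∀ n, ediam (t n) ≤ r), ∑' n, ⨆ _ : (t n).Nonempty, ediam (t n) ^ d) δ hδ).trans_lt hlt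

lemma exists_radius_gt {X : Type*} [MetricSpace X] {d δ : ℝ} (hd : 0 < d) (hδ : 0 < δ)
    {t : Set X} (ht : ediam t ≤ ENNReal.ofReal (δ / 2)) {ε : ℝ≥0} (hε : 0 < ε) :
    ∃ ρ : ℝ, 0 < ρ ∧ ρ ≤ δ ∧ (∀ x ∈ t, t ⊆ ball x ρ) ∧
      ENNReal.ofReal ρ ^ d ≤ 2 ^ d * ((⨆ _ : t.Nonempty, ediam t ^ d) + ε) := by
  have htop : ediam t ≠ ⊤ := (ht.trans_lt ENNReal.ofReal_lt_top).ne
  set σ : ℝ := min (δ / 2) ((ε : ℝ) ^ (1 / d))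
  have hσ : 0 < σ := lt_min (half_pos hδ) (Real.rpow_pos_of_pos hε _)
  have hσε : ENNReal.ofReal σ ^ d ≤ ε := by
    calc ENNReal.ofReal σ ^ d ≤ ENNReal.ofReal ((ε : ℝ) ^ (1 / d)) ^ d := by
          gcongr
          exact min_le_right _ _
      _ = ε := by
          rw [← ENNReal.ofReal_rpow_of_pos (by exact_mod_cast hε), ← ENNReal.rpow_mul,
            one_div_mul_cancel hd.ne', ENNReal.rpow_one, ENNReal.ofReal_coe_nnreal]
  have hdiam : ediam t ^ d ≤ ⨆ _ : t.Nonempty, ediam t ^ d := by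
    rcases t.eq_empty_or_nonempty with rfl | hne
    · simp [hd]
    · simp [hne]
  refine ⟨(ediam t).toReal + σ, by positivity, ?_, fun x hx y hy => ?_, ?_⟩
  · have hle := ENNReal.toReal_le_of_le_ofReal (half_pos hδ).le ht
    linarith [min_le_left (δ / 2) ((ε : ℝ) ^ (1 / d))]
  · rw [mem_ball, dist_edist]
    have := ENNReal.toReal_mono htop (edist_le_ediam_of_mem hy hx)
    linarith
  · rw [ENNReal.ofReal_add ENNReal.toReal_nonneg hσ.le, ENNReal.ofReal_toReal htop]
    refine (add_rpow_le_two_rpow_mul hd.le _ _).trans ?_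
    gcongr

lemma exists_ball_cover_tsum_rpow_le {X : Type*} [MetricSpace X] [Nonempty X] [MeasurableSpace X]
    [BorelSpace X] {d : ℝ} (hd : 0 < d) {s : Set X} (hs : μH[d] s = 0) {δ : ℝ} (hδ : 0 < δ)
    {η : ℝ≥0∞} (hη : η ≠ 0) :
    ∃ (y : ℕ → X) (ρ : ℕ → ℝ), (∀ i, 0 < ρ i ∧ ρ i ≤ δ) ∧ s ⊆ ⋃ i, ball (y i) (ρ i) ∧
      ∑' i, ENNReal.ofReal (ρ i) ^ d ≤ η := by
  have h2top : (2 : ℝ≥0∞) ^ d ≠ ⊤ := by simp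
  have h20 : (2 : ℝ≥0∞) ^ d ≠ 0 := by simp [hd.not_gt]
  set ζ : ℝ≥0∞ := (2 ^ d)⁻¹ * (η / 2) with hζ
  have hζ0 : ζ ≠ 0 :=
    mul_ne_zero (ENNReal.inv_ne_zero.2 h2top) (ENNReal.div_ne_zero.2 ⟨hη, by simp⟩)
  obtain ⟨t, hst, hdiam, hsum⟩ := exists_cover_tsum_ediam_rpow_lt hs
    (ENNReal.ofReal_pos.2 (half_pos hδ)) hζ0
  obtain ⟨ε, hε, hεsum⟩ := ENNReal.exists_pos_sum_of_countable hζ0 ℕ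
  choose ρ hρ hρδ hball hρd using fun i => exists_radius_gt hd hδ (hdiam i) (hε i)
  have hcenter (i : ℕ) : ∃ y, t i ⊆ ball y (ρ i) := by
    rcases (t i).eq_empty_or_nonempty with h | ⟨x, hx⟩
    · exact ⟨Classical.arbitrary X, by simp [h]⟩
    · exact ⟨x, hball i x hx⟩
  choose y hy using hcenter
  refine ⟨y, ρ, fun i => ⟨hρ i, hρδ i⟩, hst.trans (iUnion_mono hy), ?_⟩
  calc ∑' i, ENNReal.ofReal (ρ i) ^ d
      ≤ 2 ^ d * (∑' i, (⨆ _ : (t i).Nonempty, ediam (t i) ^ d) + ∑' i, (ε i : ℝ≥0∞)) := by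
        rw [← ENNReal.tsum_add, ← ENNReal.tsum_mul_left]
        exact ENNReal.tsum_le_tsum hρd
    _ ≤ 2 ^ d * (ζ + ζ) := by gcongr
    _ = 2 ^ d * (2 ^ d)⁻¹ * (η / 2 + η / 2) := by rw [hζ]; ring
    _ = η := by rw [ENNReal.mul_inv_cancel h20 h2top, one_mul, ENNReal.add_halves]

end Covers

section Regularity

variable {X : Type*} [PseudoMetricSpace X] [MeasurableSpace X]

/-- The Frostman condition: `ν` gives small balls with arbitrary centres at most their
`d`-dimensional size. Only radii up to `1 / 2` are considered, which is what the upper bound on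
balls of radius at most `1` centred on the support of `ν` provides. -/
def IsFrostman (ν : Measure X) (d : ℝ) (b : ℝ≥0) : Prop :=
  ∀ x : X, ∀ r : ℝ, 0 < r → r ≤ 1 / 2 → ν (closedBall x r) ≤ b * ENNReal.ofReal r ^ d

/-- `μ` is a `d`-dimensional Ahlfors regular measure on `S`, at scales up to `1`. It plays the role
of the Hausdorff measure on a `d`-set. -/
structure AhlforsRegular (μ : Measure X) (S : Set X) (d : ℝ) (a b : ℝ≥0) : Prop where
  pos : 0 < a
  ae_mem : ∀ᵐ x ∂μ, x ∈ S
  le_measure_closedBall : ∀ w ∈ S, ∀ r : ℝ, 0 < r → r ≤ 1 →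
    a * ENNReal.ofReal r ^ d ≤ μ (closedBall w r)
  measure_closedBall_le : ∀ w ∈ S, ∀ r : ℝ, 0 < r → r ≤ 1 →
    μ (closedBall w r) ≤ b * ENNReal.ofReal r ^ d

variable {μ : Measure X} {S : Set X} {d : ℝ} {a b : ℝ≥0}

lemma AhlforsRegular.isFrostman (h : AhlforsRegular μ S d a b) (hd : 0 ≤ d) :
    IsFrostman μ d (b * 2 ^ d) := by
  intro x r hr hr2
  by_cases hS : (closedBall x r ∩ S).Nonempty
  · obtain ⟨w, hw, hwS⟩ := hS
    have hsub : closedBall x r ⊆ closedBall w (2 * r) :=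
      closedBall_subset_closedBall' (by linarith [mem_closedBall'.1 hw])
    refine (measure_mono hsub).trans
      ((h.measure_closedBall_le w hwS (2 * r) (by linarith) (by linarith)).trans_eq ?_)
    rw [ENNReal.ofReal_mul zero_le_two, ENNReal.mul_rpow_of_nonneg _ _ hd, ← mul_assoc,
      ENNReal.coe_mul, ENNReal.coe_rpow_of_nonneg _ hd]
    simp
  · have hnull : μ (closedBall x r) = 0 :=
      measure_mono_null (fun y hy hyS => hS ⟨y, hy, hyS⟩) h.ae_mem
    simp [hnull]

lemma AhlforsRegular.sigmaFinite [SecondCountableTopology X] (h : AhlforsRegular μ S d a b)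
    (hd : 0 ≤ d) : SigmaFinite μ := by
  have : IsLocallyFiniteMeasure μ := ⟨fun x => ⟨closedBall x (1 / 2),
    closedBall_mem_nhds x (by norm_num),
    (h.isFrostman hd x _ (by norm_num) le_rfl).trans_lt (by finiteness)⟩⟩
  infer_instance

end Regularity

section Remez

section Family

variable {X : Type*} [MetricSpace X] [MeasurableSpace X] [BorelSpace X]
  {G : Type*} [NormedAddCommGroup G] {d : ℝ} {K : Set X}

/-- Covering the zeros in `K` by balls of small total `d`-dimensional size leaves a compact set on
which `F z₀`, hence `F z` for `z` near `z₀`, is bounded away from zero. -/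
lemma eventually_measure_norm_le_le [Nonempty X] {Z : Type*} [TopologicalSpace Z] {F : Z → X → G}
    (hF : Continuous (Function.uncurry F)) (hd : 0 < d) (hK : IsCompact K) {z₀ : Z}
    (hz₀ : μH[d] {x ∈ K | F z₀ x = 0} = 0) {η : ℝ≥0∞} (hη : η ≠ 0) (b : ℝ≥0) :
    ∀ᶠ p : ℝ × Z in 𝓝 (0, z₀), ∀ ν : Measure X, IsFrostman ν d b →
      ν {x ∈ K | ‖F p.2 x‖ ≤ p.1} ≤ η := by
  obtain ⟨y, ρ, hρ, hcov, hsum⟩ := exists_ball_cover_tsum_rpow_le hd hz₀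
    (δ := 1 / 2) (by norm_num) (ENNReal.div_ne_zero.2 ⟨hη, ENNReal.coe_ne_top (r := b)⟩)
  set O : Set X := ⋃ i, ball (y i) (ρ i)
  have hKO : IsCompact (K \ O) := hK.diff (isOpen_iUnion fun i => isOpen_ball)
  have hlarge : ∀ᶠ p : ℝ × Z in 𝓝 (0, z₀), ∀ x ∈ K \ O, p.1 < ‖F p.2 x‖ := by
    refine hKO.eventually_forall_of_forall_eventually fun x hx => ?_
    have hcont : Continuous fun q : (ℝ × Z) × X => ‖F q.1.2 q.2‖ :=
      (hF.comp (by fun_prop : Continuous fun q : (ℝ × Z) × X => (q.1.2, q.2))).norm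
    have hFx : F z₀ x ≠ 0 := fun h0 => hx.2 (hcov ⟨hx.1, h0⟩)
    exact (isOpen_lt (by fun_prop) hcont).mem_nhds
      (show (0 : ℝ) < ‖F z₀ x‖ from norm_pos_iff.2 hFx)
  filter_upwards [hlarge] with p hp ν hν
  have hsub : {x ∈ K | ‖F p.2 x‖ ≤ p.1} ⊆ ⋃ i, closedBall (y i) (ρ i) := by
    rintro x ⟨hxK, hx⟩
    by_contra hxO
    refine (hp x ⟨hxK, fun h => hxO ?_⟩).not_ge hx
    exact iUnion_mono (fun i => ball_subset_closedBall) h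
  calc ν {x ∈ K | ‖F p.2 x‖ ≤ p.1} ≤ ∑' i, ν (closedBall (y i) (ρ i)) :=
        (measure_mono hsub).trans (measure_iUnion_le _)
    _ ≤ ∑' i, b * ENNReal.ofReal (ρ i) ^ d :=
        ENNReal.tsum_le_tsum fun i => hν _ _ (hρ i).1 (hρ i).2
    _ ≤ b * (η / b) := by rw [ENNReal.tsum_mul_left]; gcongr
    _ ≤ η := ENNReal.mul_div_le

lemma enorm_mul_le_setLIntegral_enorm {g : X → G} (hg : Continuous g) {ν : Measure X}
    (hK : MeasurableSet K) {a : ℝ≥0} (hν : a ≤ ν K) {ε : ℝ}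
    (hε : ν {x ∈ K | ‖g x‖ ≤ ε} ≤ (a / 2 : ℝ≥0)) :
    ENNReal.ofReal ε * (a / 2 : ℝ≥0) ≤ ∫⁻ x in K, ‖g x‖ₑ ∂ν := by
  have hmeas : MeasurableSet {x ∈ K | ε < ‖g x‖} :=
    hK.inter (isOpen_lt continuous_const hg.norm).measurableSet
  have hlarge : ((a / 2 : ℝ≥0) : ℝ≥0∞) ≤ ν {x ∈ K | ε < ‖g x‖} := by
    have hsplit : ν K ≤ ν {x ∈ K | ε < ‖g x‖} + ν {x ∈ K | ‖g x‖ ≤ ε} := by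
      refine (measure_mono fun x hx => ?_).trans (measure_union_le _ _)
      exact (lt_or_ge ε ‖g x‖).imp (⟨hx, ·⟩) (⟨hx, ·⟩)
    have hhalf : ((a / 2 : ℝ≥0) : ℝ≥0∞) + (a / 2 : ℝ≥0) = a := by
      rw [← ENNReal.coe_add, add_halves]
    refine (ENNReal.add_le_add_iff_right (a := ((a / 2 : ℝ≥0) : ℝ≥0∞)) ENNReal.coe_ne_top).1 ?_
    exact (hhalf.trans_le (hν.trans hsplit)).trans (by gcongr)
  calc ENNReal.ofReal ε * (a / 2 : ℝ≥0)
      ≤ ∫⁻ _ in {x ∈ K | ε < ‖g x‖}, ENNReal.ofReal ε ∂ν := by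
        rw [setLIntegral_const]; gcongr
    _ ≤ ∫⁻ x in {x ∈ K | ε < ‖g x‖}, ‖g x‖ₑ ∂ν := by
        refine setLIntegral_mono' hmeas fun x hx => ?_
        rw [← ofReal_norm]
        exact ENNReal.ofReal_le_ofReal hx.2.le
    _ ≤ ∫⁻ x in K, ‖g x‖ₑ ∂ν := lintegral_mono_set (sep_subset _ _)

lemma exists_enorm_le_mul_setLIntegral_of_isCompact [Nonempty X] {Z : Type*} [TopologicalSpace Z]
    {F : Z → X → G} (hF : Continuous (Function.uncurry F)) (hd : 0 < d) (hK : IsCompact K)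
    {T : Set Z} (hT : IsCompact T) (hnull : ∀ z ∈ T, μH[d] {x ∈ K | F z x = 0} = 0) {a : ℝ≥0}
    (ha : 0 < a) (b : ℝ≥0) :
    ∃ C : ℝ≥0, ∀ ν : Measure X, IsFrostman ν d b → a ≤ ν K → ∀ z ∈ T, ∀ x ∈ K,
      ‖F z x‖ₑ ≤ C * ∫⁻ y in K, ‖F z y‖ₑ ∂ν := by
  have ha2 : 0 < a / 2 := half_pos ha
  have hsmall : ∀ᶠ ε in 𝓝 (0 : ℝ), ∀ z ∈ T, ∀ ν : Measure X, IsFrostman ν d b →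
      ν {x ∈ K | ‖F z x‖ ≤ ε} ≤ (a / 2 : ℝ≥0) :=
    hT.eventually_forall_of_forall_eventually fun z hz =>
      eventually_measure_norm_le_le hF hd hK (hnull z hz) (by exact_mod_cast ha2.ne') b
  obtain ⟨ε, hεsmall, hε⟩ :=
    ((hsmall.filter_mono nhdsWithin_le_nhds).and (self_mem_nhdsWithin (s := Ioi 0))).exists
  obtain ⟨M, hM⟩ := (hT.prod hK).exists_bound_of_continuousOn hF.continuousOn
  refine ⟨M.toNNReal / (ε.toNNReal * (a / 2)), fun ν hν haν z hz x hx => ?_⟩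
  have hε0 : 0 < ε.toNNReal * (a / 2) := mul_pos (Real.toNNReal_pos.2 hε) ha2
  calc ‖F z x‖ₑ ≤ M.toNNReal := by
        rw [← ofReal_norm]
        exact ENNReal.ofReal_le_ofReal (hM (z, x) ⟨hz, hx⟩)
    _ = (M.toNNReal / (ε.toNNReal * (a / 2)) : ℝ≥0) * (ENNReal.ofReal ε * (a / 2 : ℝ≥0)) := by
        rw [ENNReal.ofReal, ← ENNReal.coe_mul, ← ENNReal.coe_mul, div_mul_cancel₀ _ hε0.ne']
    _ ≤ _ := by
        gcongr
        exact enorm_mul_le_setLIntegral_enorm (hF.comp (Continuous.prodMk_right z))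
          hK.measurableSet haν (hεsmall z hz ν hν)

lemma exists_enorm_apply_le_mul_setLIntegral [Nonempty X] {V : Type*} [AddCommGroup V]
    [Module ℝ V] [FiniteDimensional ℝ V] [NormedSpace ℝ G] (Φ : V →ₗ[ℝ] X → G)
    (hΦ : ∀ v, Continuous (Φ v)) (hd : 0 < d) (hK : IsCompact K)
    (hnull : ∀ v ≠ 0, μH[d] {x ∈ K | Φ v x = 0} = 0) {a : ℝ≥0} (ha : 0 < a) (b : ℝ≥0) :
    ∃ C : ℝ≥0, ∀ ν : Measure X, IsFrostman ν d b → a ≤ ν K → ∀ v, ∀ x ∈ K,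
      ‖Φ v x‖ₑ ≤ C * ∫⁻ y in K, ‖Φ v y‖ₑ ∂ν := by
  let B := Module.finBasis ℝ V
  let F : (Fin (Module.finrank ℝ V) → ℝ) → X → G := fun c => Φ (B.equivFun.symm c)
  have hF : Continuous (Function.uncurry F) := by
    have : Function.uncurry F = fun p => ∑ i, p.1 i • Φ (B i) p.2 := by
      ext p
      simp [F, Function.uncurry, B.equivFun_symm_apply]
    rw [this]
    exact continuous_finsetSum _ fun i _ =>
      ((continuous_apply i).comp continuous_fst).smul ((hΦ _).comp continuous_snd)
  obtain ⟨C, hC⟩ := exists_enorm_le_mul_setLIntegral_of_isCompact hF hd hK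
    (isCompact_sphere 0 1) (fun c hc => hnull _ (by
      rw [ne_eq, EmbeddingLike.map_eq_zero_iff]
      exact ne_zero_of_mem_unit_sphere ⟨c, hc⟩)) ha b
  refine ⟨C, fun ν hν haν v x hx => ?_⟩
  rcases eq_or_ne v 0 with rfl | hv
  · simp
  set c := B.equivFun v
  have hc : ‖c‖ ≠ 0 := norm_ne_zero_iff.2 (by simpa [c] using hv)
  have hunit : ‖c‖⁻¹ • c ∈ sphere 0 1 := by
    rw [mem_sphere_zero_iff_norm, norm_smul, norm_inv, norm_norm, inv_mul_cancel₀ hc]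
  have hFc : F (‖c‖⁻¹ • c) = ‖c‖⁻¹ • Φ v := by
    simp only [F, c, map_smul, LinearEquiv.symm_apply_apply]
  have hhom (y : X) : ‖Φ v y‖ₑ = ‖c‖ₑ * ‖F (‖c‖⁻¹ • c) y‖ₑ := by
    rw [← enorm_norm c, ← enorm_smul, hFc, Pi.smul_apply, smul_inv_smul₀ hc]
  simp only [hhom]
  rw [lintegral_const_mul' _ _ enorm_ne_top, mul_left_comm]
  gcongr
  exact hC ν hν haν _ hunit x hx

end Family

section Polynomial

variable {σ : Type*}

lemma totalDegree_aeval_le {τ R : Type*} [CommSemiring R] {g : σ → MvPolynomial τ R}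
    (hg : ∀ i, (g i).totalDegree ≤ 1) (P : MvPolynomial σ R) :
    (MvPolynomial.aeval g P).totalDegree ≤ P.totalDegree := by
  rw [MvPolynomial.aeval_def, MvPolynomial.eval₂_eq]
  refine MvPolynomial.totalDegree_finsetSum_le fun a ha => ?_
  refine (MvPolynomial.totalDegree_mul _ _).trans ?_
  rw [MvPolynomial.algebraMap_eq, MvPolynomial.totalDegree_C, zero_add]
  refine (MvPolynomial.totalDegree_finsetProd _ _).trans
    (le_trans (Finset.sum_le_sum fun i _ => ?_) (MvPolynomial.le_totalDegree ha))
  exact (MvPolynomial.totalDegree_pow _ _).trans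
    ((Nat.mul_le_mul_left _ (hg i)).trans_eq (mul_one _))

lemma exists_eval_eq_eval_add_smul {R : Type*} [CommSemiring R] [Nontrivial R]
    (P : MvPolynomial σ R) (w : σ → R) (r : R) :
    ∃ Q : MvPolynomial σ R, Q.totalDegree ≤ P.totalDegree ∧
      ∀ y, MvPolynomial.eval y Q = MvPolynomial.eval (w + r • y) P := by
  refine ⟨MvPolynomial.aeval
    (fun i => MvPolynomial.C (w i) + MvPolynomial.C r * MvPolynomial.X i) P,
    totalDegree_aeval_le (fun i => ?_) P, fun y => ?_⟩
  · refine (MvPolynomial.totalDegree_add _ _).trans (max_le (by simp) ?_)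
    exact (MvPolynomial.totalDegree_mul _ _).trans (by simp)
  · rw [MvPolynomial.aeval_def, MvPolynomial.eval₂_eq, map_sum, MvPolynomial.eval_eq]
    simp

variable [Fintype σ] {d : ℝ}

lemma exists_enorm_eval_le_on_unit_ball (hσ : (Fintype.card σ : ℝ) - 1 < d) (hd : 0 < d) (m : ℕ)
    {a : ℝ≥0} (ha : 0 < a) (b : ℝ≥0) :
    ∃ C : ℝ≥0, ∀ ν : Measure (σ → ℝ), IsFrostman ν d b → a ≤ ν (closedBall 0 1) →
      ∀ P : MvPolynomial σ ℝ, P.totalDegree ≤ m → ∀ x ∈ closedBall (0 : σ → ℝ) 1,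
        ‖MvPolynomial.eval x P‖ₑ ≤ C * ∫⁻ y in closedBall 0 1, ‖MvPolynomial.eval y P‖ₑ ∂ν := by
  let Φ : MvPolynomial.restrictTotalDegree σ ℝ m →ₗ[ℝ] (σ → ℝ) → ℝ :=
    LinearMap.pi fun x => (MvPolynomial.aeval x).toLinearMap ∘ₗ Submodule.subtype _
  have hnull (P : MvPolynomial.restrictTotalDegree σ ℝ m) (hP : P ≠ 0) :
      μH[d] {x ∈ closedBall 0 1 | Φ P x = 0} = 0 :=
    measure_mono_null (fun x hx => hx.2)
      (hausdorffMeasure_eval_eq_zero hσ hd (P := P) (by simpa using hP))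
  obtain ⟨C, hC⟩ := exists_enorm_apply_le_mul_setLIntegral Φ
    (fun P => MvPolynomial.continuous_eval (P : MvPolynomial σ ℝ)) hd (isCompact_closedBall 0 1)
    hnull ha b
  exact ⟨C, fun ν hν haν P hP => hC ν hν haν
    ⟨P, (MvPolynomial.mem_restrictTotalDegree σ m P).2 hP⟩⟩

end Polynomial

section BlowUp

variable {E : Type*} [NormedAddCommGroup E] [NormedSpace ℝ E] {d r : ℝ} {w : E}

lemma preimage_inv_smul_sub_closedBall (hr : 0 < r) (w y : E) (ρ : ℝ) :
    (fun x => r⁻¹ • (x - w)) ⁻¹' closedBall y ρ = closedBall (w + r • y) (r * ρ) := by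
  ext x
  have hx : x = w + r • r⁻¹ • (x - w) := by rw [smul_inv_smul₀ hr.ne', add_sub_cancel]
  conv_rhs => rw [hx, mem_closedBall, dist_add_left, dist_smul₀, Real.norm_of_nonneg hr.le]
  exact (mul_le_mul_iff_right₀ hr).symm

variable [MeasurableSpace E] [BorelSpace E] {μ : Measure E}

/-- The blow-up of `μ` at the point `w` and scale `r`, normalised so that `d`-dimensional upper and
lower regularity survive with the same constants. -/
def blowUp (μ : Measure E) (d : ℝ) (w : E) (r : ℝ) : Measure E :=
  ENNReal.ofReal r ^ (-d) • μ.map fun x => r⁻¹ • (x - w)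

lemma blowUp_closedBall (hr : 0 < r) (y : E) (ρ : ℝ) :
    blowUp μ d w r (closedBall y ρ) =
      ENNReal.ofReal r ^ (-d) * μ (closedBall (w + r • y) (r * ρ)) := by
  rw [blowUp, Measure.smul_apply, Measure.map_apply (by fun_prop) measurableSet_closedBall,
    preimage_inv_smul_sub_closedBall hr, smul_eq_mul]

lemma setLIntegral_blowUp_closedBall (hr : 0 < r) {g : E → ℝ≥0∞} (hg : Measurable g) :
    ∫⁻ y in closedBall 0 1, g y ∂(blowUp μ d w r) =
      ENNReal.ofReal r ^ (-d) * ∫⁻ x in closedBall w r, g (r⁻¹ • (x - w)) ∂μ := by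
  rw [blowUp, Measure.restrict_smul, lintegral_smul_measure,
    setLIntegral_map measurableSet_closedBall hg (by fun_prop),
    preimage_inv_smul_sub_closedBall hr, smul_zero, add_zero, mul_one, smul_eq_mul]

lemma ofReal_rpow_neg_mul_rpow (hr : 0 < r) (d : ℝ) :
    ENNReal.ofReal r ^ (-d) * ENNReal.ofReal r ^ d = 1 := by
  rw [← ENNReal.rpow_add _ _ (ENNReal.ofReal_pos.2 hr).ne' ENNReal.ofReal_ne_top, neg_add_cancel,
    ENNReal.rpow_zero]

lemma IsFrostman.blowUp {b : ℝ≥0} (h : IsFrostman μ d b) (hd : 0 ≤ d) (hr : 0 < r) (hr1 : r ≤ 1) :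
    IsFrostman (blowUp μ d w r) d b := by
  intro y ρ hρ hρ2
  rw [blowUp_closedBall hr]
  calc ENNReal.ofReal r ^ (-d) * μ (closedBall (w + r • y) (r * ρ))
      ≤ ENNReal.ofReal r ^ (-d) * (b * ENNReal.ofReal (r * ρ) ^ d) := by
        gcongr
        exact h _ _ (mul_pos hr hρ) (by nlinarith)
    _ = ENNReal.ofReal r ^ (-d) * ENNReal.ofReal r ^ d * (b * ENNReal.ofReal ρ ^ d) := by
        rw [ENNReal.ofReal_mul hr.le, ENNReal.mul_rpow_of_nonneg _ _ hd]
        ring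
    _ = b * ENNReal.ofReal ρ ^ d := by rw [ofReal_rpow_neg_mul_rpow hr, one_mul]

lemma AhlforsRegular.le_blowUp_closedBall {S : Set E} {a b : ℝ≥0} (h : AhlforsRegular μ S d a b)
    (hw : w ∈ S) (hr : 0 < r) (hr1 : r ≤ 1) : a ≤ blowUp μ d w r (closedBall 0 1) := by
  rw [blowUp_closedBall hr, smul_zero, add_zero, mul_one]
  calc (a : ℝ≥0∞) = ENNReal.ofReal r ^ (-d) * (a * ENNReal.ofReal r ^ d) := by
        rw [mul_left_comm, ofReal_rpow_neg_mul_rpow hr, mul_one]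
    _ ≤ _ := by
        gcongr
        exact h.le_measure_closedBall w hw r hr hr1

end BlowUp

/-- The constant does not depend on `w` and `r`: all blow-ups of `μ` at points of `S` obey the same
regularity bounds. -/
theorem AhlforsRegular.exists_enorm_eval_le {σ : Type*} [Fintype σ] {μ : Measure (σ → ℝ)}
    {S : Set (σ → ℝ)} {d : ℝ} {a b : ℝ≥0} (h : AhlforsRegular μ S d a b)
    (hσ : (Fintype.card σ : ℝ) - 1 < d) (hd : 0 < d) (m : ℕ) :
    ∃ C : ℝ≥0, ∀ P : MvPolynomial σ ℝ, P.totalDegree ≤ m → ∀ w ∈ S, ∀ r : ℝ, 0 < r → r ≤ 1 →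
      ∀ x ∈ closedBall w r, ‖MvPolynomial.eval x P‖ₑ ≤
        C * (ENNReal.ofReal r ^ (-d) * ∫⁻ y in closedBall w r, ‖MvPolynomial.eval y P‖ₑ ∂μ) := by
  obtain ⟨C, hC⟩ := exists_enorm_eval_le_on_unit_ball hσ hd m h.pos (b * 2 ^ d)
  refine ⟨C, fun P hP w hw r hr hr1 x hx => ?_⟩
  obtain ⟨Q, hQ, hQP⟩ := exists_eval_eq_eval_add_smul P w r
  have hPQ (z : σ → ℝ) : MvPolynomial.eval z P = MvPolynomial.eval (r⁻¹ • (z - w)) Q := by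
    rw [hQP, smul_inv_smul₀ hr.ne', add_sub_cancel]
  have hx1 : r⁻¹ • (x - w) ∈ closedBall (0 : σ → ℝ) 1 := by
    rw [← mem_preimage (f := fun x => r⁻¹ • (x - w)), preimage_inv_smul_sub_closedBall hr]
    simpa using hx
  have hbound := hC (blowUp μ d w r) ((h.isFrostman hd.le).blowUp hd.le hr hr1)
    (h.le_blowUp_closedBall hw hr hr1) Q (hQ.trans hP) _ hx1
  rw [setLIntegral_blowUp_closedBall hr (MvPolynomial.continuous_eval Q).enorm.measurable] at hbound
  simpa only [hPQ] using hbound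

end Remez

section Averages

variable {X E : Type*} [MeasurableSpace X] [NormedAddCommGroup E] [NormedSpace ℝ E] {μ : Measure X}

lemma setLAverage_le_of_forall_le {s : Set X} {g : X → ℝ≥0∞} {c : ℝ≥0∞} (hs : MeasurableSet s)
    (h : ∀ y ∈ s, g y ≤ c) : ⨍⁻ y in s, g y ∂μ ≤ c := by
  rw [setLAverage_eq]
  refine ENNReal.div_le_of_le_mul ((setLIntegral_mono' hs h).trans_eq ?_)
  rw [setLIntegral_const]

lemma enorm_average_sub_average_le {f g : X → E} (hf : Integrable f μ) (hg : Integrable g μ) :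
    ‖⨍ y, f y ∂μ - ⨍ y, g y ∂μ‖ₑ ≤ ⨍⁻ y, ‖f y - g y‖ₑ ∂μ := by
  rw [average, average, ← integral_sub hf.to_average hg.to_average]
  exact enorm_integral_le_lintegral_enorm _

lemma tendsto_setAverage_closedBall [MetricSpace X] [ProperSpace X] [BorelSpace X]
    [IsFiniteMeasureOnCompacts μ] [μ.IsOpenPosMeasure] [CompleteSpace E] {g : X → E}
    (hg : Continuous g) (w : X) :
    Tendsto (fun r : ℝ => ⨍ y in closedBall w r, g y ∂μ) (𝓝[>] 0) (𝓝 (g w)) := by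
  rw [nhds_basis_closedBall.tendsto_right_iff]
  intro ε hε
  obtain ⟨δ, hδ, hgδ⟩ := Metric.continuous_iff.1 hg w ε hε
  filter_upwards [Ioo_mem_nhdsGT hδ] with r ⟨hr, hrδ⟩
  refine (convex_closedBall _ _).set_average_mem isClosed_closedBall
    (measure_closedBall_pos μ w hr).ne' measure_closedBall_lt_top.ne ?_
    (hg.continuousOn.integrableOn_compact (isCompact_closedBall _ _))
  refine (ae_restrict_iff' isClosed_closedBall.measurableSet).2 (.of_forall fun y hy => ?_)
  exact (hgδ y ((mem_closedBall.1 hy).trans_lt hrδ)).le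

end Averages

section LocalApproximation

variable {n : ℕ}

lemma volume_closedBall (x : Rn n) {r : ℝ} (hr : 0 ≤ r) :
    volume (closedBall x r) = ENNReal.ofReal (2 * r) ^ n := by
  rw [Real.volume_pi_closedBall x hr, ENNReal.ofReal_pow (by positivity), Fintype.card_fin]

lemma setLAverage_closedBall_le_mul {g : Rn n → ℝ≥0∞} {x y : Rn n} {r ρ : ℝ} {c : ℝ≥0} (hr : 0 < r)
    (hρ : 0 < ρ) (hc : ρ ≤ c * r) (hsub : closedBall x r ⊆ closedBall y ρ) :
    ⨍⁻ z in closedBall x r, g z ∂volume ≤ c ^ n * ⨍⁻ z in closedBall y ρ, g z ∂volume := by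
  have hvol : volume (closedBall y ρ) ≤ c ^ n * volume (closedBall x r) := by
    have hc' : 2 * ρ ≤ c * (2 * r) := by linarith
    rw [volume_closedBall y hρ.le, volume_closedBall x hr.le, ← mul_pow,
      ← ENNReal.ofReal_coe_nnreal, ← ENNReal.ofReal_mul c.coe_nonneg]
    gcongr
  rw [setLAverage_eq]
  refine ENNReal.div_le_of_le_mul ?_
  calc ∫⁻ z in closedBall x r, g z ≤ ∫⁻ z in closedBall y ρ, g z := lintegral_mono_set hsub
    _ = volume (closedBall y ρ) * ⨍⁻ z in closedBall y ρ, g z ∂volume :=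
        (measure_mul_setLAverage _ measure_closedBall_lt_top.ne).symm
    _ ≤ c ^ n * volume (closedBall x r) * ⨍⁻ z in closedBall y ρ, g z ∂volume := by gcongr
    _ = _ := by ring

lemma ahlforsRegular_volume : AhlforsRegular (volume : Measure (Rn n)) univ n (2 ^ n) (2 ^ n) := by
  have hball (w : Rn n) (r : ℝ) (hr : 0 < r) :
      volume (closedBall w r) = (2 ^ n : ℝ≥0) * ENNReal.ofReal r ^ (n : ℝ) := by
    rw [volume_closedBall w hr.le, ENNReal.ofReal_mul zero_le_two, mul_pow, ENNReal.rpow_natCast]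
    simp
  exact ⟨by positivity, by simp, fun w _ r hr _ => (hball w r hr).ge,
    fun w _ r hr _ => (hball w r hr).le⟩

lemma exists_enorm_eval_le_mul_setLAverage (hn : 0 < n) (m : ℕ) :
    ∃ C : ℝ≥0, ∀ P : MvPolynomial (Fin n) ℝ, P.totalDegree ≤ m → ∀ (w : Rn n) (r : ℝ), 0 < r →
      r ≤ 1 → ∀ x ∈ closedBall w r, ‖MvPolynomial.eval x P‖ₑ ≤
        C * ⨍⁻ y in closedBall w r, ‖MvPolynomial.eval y P‖ₑ ∂volume := by
  obtain ⟨C, hC⟩ := (ahlforsRegular_volume (n := n)).exists_enorm_eval_le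
    (by simp) (by exact_mod_cast hn) m
  refine ⟨C * 2 ^ n, fun P hP w r hr hr1 x hx => (hC P hP w trivial r hr hr1 x hx).trans_eq ?_⟩
  have hr0 : ENNReal.ofReal r ≠ 0 := by simpa using hr
  rw [← measure_mul_setLAverage _ measure_closedBall_lt_top.ne, volume_closedBall w hr.le,
    ENNReal.ofReal_mul zero_le_two, ENNReal.rpow_neg, ENNReal.rpow_natCast, mul_pow]
  calc _ = C * 2 ^ n * ((ENNReal.ofReal r ^ n)⁻¹ * ENNReal.ofReal r ^ n) *
        ⨍⁻ y in closedBall w r, ‖MvPolynomial.eval y P‖ₑ ∂volume := by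
        simp only [ENNReal.ofReal_ofNat]; ring
    _ = _ := by
        rw [ENNReal.inv_mul_cancel (pow_ne_zero _ hr0) (by finiteness)]
        simp

/-- The `L¹` deviation of `f` from the polynomial `P` on the cube `Q(x, r)`, averaged over the cube;
its infimum over `P` is the local best approximation `ℰ_k(f, Q(x, r))_{L¹}`. -/
def polyDev (f : Rn n → ℝ) (P : MvPolynomial (Fin n) ℝ) (x : Rn n) (r : ℝ) : ℝ≥0∞ :=
  ⨍⁻ y in closedBall x r, ‖f y - MvPolynomial.eval y P‖ₑ ∂volume

lemma localApprox_one_eq_iInf_polyDev (k : ℕ) (f : Rn n → ℝ) (x : Rn n) (r : ℝ) :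
    localApprox k 1 f x r =
      ⨅ (P : MvPolynomial (Fin n) ℝ) (_ : P.totalDegree ≤ k - 1), polyDev f P x r := by
  simp [localApprox, polyDev, setLAverage_eq, Real.enorm_eq_ofReal_abs, ENNReal.div_eq_inv_mul]

lemma exists_polyDev_le_localApprox_add (m : ℕ) (f : Rn n → ℝ) (x : Rn n) (r : ℝ) {δ : ℝ≥0∞}
    (hδ : δ ≠ 0) : ∃ P : MvPolynomial (Fin n) ℝ, P.totalDegree ≤ m ∧
      polyDev f P x r ≤ localApprox (m + 1) 1 f x r + δ := by
  by_cases htop : localApprox (m + 1) 1 f x r = ⊤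
  · exact ⟨0, by simp, by simp [htop]⟩
  · have hlt := ENNReal.lt_add_right htop hδ
    conv_lhs at hlt => rw [localApprox_one_eq_iInf_polyDev]
    simp only [iInf_lt_iff, add_tsub_cancel_right] at hlt
    obtain ⟨P, hP, hPδ⟩ := hlt
    exact ⟨P, hP, hPδ.le⟩

lemma localApprox_one_le_mul (k : ℕ) (f : Rn n → ℝ) {x y : Rn n} {r ρ : ℝ} {c : ℝ≥0} (hc0 : c ≠ 0)
    (hr : 0 < r) (hρ : 0 < ρ) (hc : ρ ≤ c * r) (hsub : closedBall x r ⊆ closedBall y ρ) :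
    localApprox k 1 f x r ≤ c ^ n * localApprox k 1 f y ρ := by
  have hc0' : (c : ℝ≥0∞) ^ n ≠ 0 := pow_ne_zero _ (by exact_mod_cast hc0)
  simp only [localApprox_one_eq_iInf_polyDev, ENNReal.mul_iInf_of_ne hc0' (by finiteness)]
  exact iInf₂_mono fun P _ => setLAverage_closedBall_le_mul hr hρ hc hsub

lemma polyDev_le_polyDev_add {f : Rn n → ℝ} (hf : AEStronglyMeasurable f)
    (P Q : MvPolynomial (Fin n) ℝ) (x : Rn n) (r : ℝ) :
    polyDev f P x r ≤ polyDev f Q x r +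
      ⨍⁻ y in closedBall x r, ‖MvPolynomial.eval y Q - MvPolynomial.eval y P‖ₑ ∂volume := by
  have hmeas : AEMeasurable (fun y => ‖f y - MvPolynomial.eval y Q‖ₑ) :=
    (hf.sub (MvPolynomial.continuous_eval Q).aestronglyMeasurable).enorm
  simp only [polyDev, setLAverage_eq, ← ENNReal.add_div, ← lintegral_add_left' hmeas.restrict]
  gcongr with y
  exact (sub_add_sub_cancel (f y) _ _).symm ▸ enorm_add_le _ _

/-- By the Remez inequality it suffices to compare the averages of `P` and `Q` on the ball. -/
lemma exists_enorm_eval_sub_eval_le (hn : 0 < n) (m : ℕ) :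
    ∃ C : ℝ≥0, ∀ f : Rn n → ℝ, AEStronglyMeasurable f → ∀ P Q : MvPolynomial (Fin n) ℝ,
      P.totalDegree ≤ m → Q.totalDegree ≤ m → ∀ (w : Rn n) (r : ℝ), 0 < r → r ≤ 1 →
      ∀ x ∈ closedBall w r, ‖MvPolynomial.eval x P - MvPolynomial.eval x Q‖ₑ ≤
        C * (polyDev f P w r + polyDev f Q w r) := by
  obtain ⟨C, hC⟩ := exists_enorm_eval_le_mul_setLAverage hn m
  refine ⟨C, fun f hf P Q hP hQ w r hr hr1 x hx => ?_⟩
  rw [← map_sub]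
  refine (hC (P - Q) ((MvPolynomial.totalDegree_sub _ _).trans (max_le hP hQ))
    w r hr hr1 x hx).trans ?_
  have hmeas : AEMeasurable (fun y => ‖f y - MvPolynomial.eval y P‖ₑ) :=
    (hf.sub (MvPolynomial.continuous_eval P).aestronglyMeasurable).enorm
  simp only [polyDev, setLAverage_eq, ← ENNReal.add_div, ← lintegral_add_left' hmeas.restrict]
  gcongr with y
  calc ‖MvPolynomial.eval y (P - Q)‖ₑ
      = ‖(f y - MvPolynomial.eval y Q) - (f y - MvPolynomial.eval y P)‖ₑ := by
        rw [map_sub, sub_sub_sub_cancel_left]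
    _ ≤ _ := enorm_sub_le.trans_eq (add_comm _ _)

lemma enorm_sub_eval_le_of_tendsto_setAverage {f : Rn n → ℝ} (hf : LocallyIntegrable f)
    (P : MvPolynomial (Fin n) ℝ) {w : Rn n} {v : ℝ} {r : ℕ → ℝ} (hr : Tendsto r atTop (𝓝[>] 0))
    (hv : Tendsto (fun ρ : ℝ => ⨍ y in closedBall w ρ, f y) (𝓝[>] 0) (𝓝 v)) {B : ℝ≥0∞}
    (hB : ∀ i, polyDev f P w (r i) ≤ B) : ‖v - MvPolynomial.eval w P‖ₑ ≤ B := by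
  have hP := MvPolynomial.continuous_eval P
  refine le_of_tendsto'
    (((hv.sub (tendsto_setAverage_closedBall (μ := volume) hP w)).comp hr).enorm) fun i => ?_
  exact (enorm_average_sub_average_le (hf.integrableOn_isCompact (isCompact_closedBall _ _))
    (hP.continuousOn.integrableOn_compact (isCompact_closedBall _ _))).trans (hB i)

end LocalApproximation

section Scales

/-- The dyadic scales `hⱼ = 2^{-(j+4)}`. They start at `1/16` so that even `10 hⱼ` is less than
`1`, the upper end of the range of radii in the Triebel–Lizorkin norm. -/
def scale (j : ℕ) : ℝ := (1 / 2) ^ (j + 4)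

lemma scale_pos (j : ℕ) : 0 < scale j := by
  unfold scale
  positivity

lemma scale_add (j i : ℕ) : scale (j + i) = (1 / 2) ^ i * scale j := by
  unfold scale
  ring

lemma scale_eq_two_mul (j : ℕ) : scale j = 2 * scale (j + 1) := by
  rw [scale_add]
  ring

lemma scale_strictAnti : StrictAnti scale := fun _ _ h =>
  pow_lt_pow_right_of_lt_one₀ (by norm_num) (by norm_num) (by lia)

lemma scale_antitone : Antitone scale := scale_strictAnti.antitone

lemma scale_le (j : ℕ) : scale j ≤ 1 / 16 :=
  (scale_antitone (Nat.zero_le j)).trans_eq (by norm_num [scale])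

lemma tendsto_scale_add (j : ℕ) : Tendsto (fun i => scale (j + i)) atTop (𝓝[>] 0) := by
  refine tendsto_nhdsWithin_iff.2 ⟨?_, .of_forall fun i => scale_pos _⟩
  have hpow := tendsto_pow_atTop_nhds_zero_of_lt_one (r := (1 / 2 : ℝ)) (by norm_num) (by norm_num)
  simpa only [scale_add, zero_mul] using hpow.mul_const (scale j)

lemma ofReal_scale_add_rpow (j i : ℕ) (σ : ℝ) :
    ENNReal.ofReal (scale (j + i)) ^ σ = ((2⁻¹ : ℝ≥0∞) ^ σ) ^ i * ENNReal.ofReal (scale j) ^ σ := by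
  rw [scale_add, ENNReal.ofReal_mul (by positivity), ENNReal.ofReal_pow (by positivity),
    ENNReal.mul_rpow_of_ne_top (by finiteness) (by finiteness), ← ENNReal.rpow_natCast,
    ← ENNReal.rpow_natCast, ← ENNReal.rpow_mul, ← ENNReal.rpow_mul, mul_comm (i : ℝ), one_div,
    ENNReal.ofReal_inv_of_pos zero_lt_two, ENNReal.ofReal_ofNat]

end Scales

section Grid

variable {n : ℕ} {h : ℝ}

/-- The point of the lattice `h ℤⁿ` at the lower corner of the half-open cell of side `h` containing
`x`. Local approximations are evaluated at such points: as the lattice is countable, measurability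
is then automatic, whereas for `x ↦ ℰ_k(f, Q(x, r))` it would need a proof. -/
def gridPoint (h : ℝ) (x : Rn n) : Rn n := fun i => ⌊x i / h⌋ * h

lemma gridPoint_le (hh : 0 < h) (x : Rn n) (i : Fin n) : gridPoint h x i ≤ x i :=
  (le_div_iff₀ hh).1 (Int.floor_le _)

lemma lt_gridPoint_add (hh : 0 < h) (x : Rn n) (i : Fin n) : x i < gridPoint h x i + h := by
  have := (div_lt_iff₀ hh).1 (Int.lt_floor_add_one (x i / h))
  rwa [add_mul, one_mul] at this

lemma gridPoint_eq_of_mem_Ico (hh : 0 < h) {x w : Rn n}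
    (hx : ∀ i, x i ∈ Ico (gridPoint h w i) (gridPoint h w i + h)) :
    gridPoint h x = gridPoint h w := by
  funext i
  have hfloor : ⌊x i / h⌋ = ⌊w i / h⌋ := by
    rw [Int.floor_eq_iff, le_div_iff₀ hh, div_lt_iff₀ hh, add_mul, one_mul]
    exact hx i
  simp only [gridPoint, hfloor]

lemma dist_gridPoint_le (hh : 0 < h) (x : Rn n) : dist x (gridPoint h x) ≤ h := by
  refine (dist_pi_le_iff hh.le).2 fun i => ?_
  rw [Real.dist_eq, abs_le]
  constructor <;> linarith [gridPoint_le hh x i, lt_gridPoint_add hh x i]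

lemma dist_le_of_gridPoint_eq (hh : 0 < h) {x y : Rn n} (hxy : gridPoint h x = gridPoint h y) :
    dist x y ≤ h := by
  refine (dist_pi_le_iff hh.le).2 fun i => ?_
  have hi := congrFun hxy i
  rw [Real.dist_eq, abs_le]
  constructor <;>
    linarith [gridPoint_le hh x i, lt_gridPoint_add hh x i, gridPoint_le hh y i,
      lt_gridPoint_add hh y i]

lemma measurable_comp_gridPoint {α : Type*} [MeasurableSpace α] (φ : Rn n → α) (h : ℝ) :
    Measurable fun x => φ (gridPoint h x) :=
  (measurable_of_countable fun z : Fin n → ℤ => φ fun i => z i * h).comp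
    (measurable_pi_iff.2 fun i => Int.measurable_floor.comp (by fun_prop) :
      Measurable fun x : Rn n => fun i => ⌊x i / h⌋)

/-- The half-open lattice cell of side `h` containing `w`. -/
def gridCell (h : ℝ) (w : Rn n) : Set (Rn n) := {x | gridPoint h x = gridPoint h w}

lemma measurableSet_gridCell (h : ℝ) (w : Rn n) : MeasurableSet (gridCell h w) :=
  measurableSet_eq_fun (measurable_comp_gridPoint id h) measurable_const

lemma le_volume_gridCell (hh : 0 < h) (w : Rn n) :
    ENNReal.ofReal h ^ n ≤ volume (gridCell h w) := by
  have hvol : volume (univ.pi fun i => Ico (gridPoint h w i) (gridPoint h w i + h)) =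
      ENNReal.ofReal h ^ n := by
    simp [Real.volume_pi_Ico]
  rw [← hvol]
  exact measure_mono fun x hx => gridPoint_eq_of_mem_Ico hh fun i => hx i (mem_univ i)

/-- The local best approximation of `f` of order `k` on a cube of radius `4 hⱼ` around `x`, up to
moving `x` to the grid of mesh `hⱼ`. -/
def gridApprox (k : ℕ) (f : Rn n → ℝ) (j : ℕ) (x : Rn n) : ℝ≥0∞ :=
  localApprox k 1 f (gridPoint (scale j) x) (4 * scale j)

lemma measurable_gridApprox (k : ℕ) (f : Rn n → ℝ) (j : ℕ) : Measurable (gridApprox k f j) :=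
  measurable_comp_gridPoint (fun z => localApprox k 1 f z (4 * scale j)) (scale j)

/-- The sum `∑_{i ≥ j} Eᵢ` of the grid approximations at the scales finer than `hⱼ`. -/
def approxTail (k : ℕ) (f : Rn n → ℝ) (j : ℕ) (x : Rn n) : ℝ≥0∞ := ∑' i, gridApprox k f (j + i) x

lemma measurable_approxTail (k : ℕ) (f : Rn n → ℝ) (j : ℕ) : Measurable (approxTail k f j) :=
  .tsum fun i => measurable_gridApprox k f (j + i)

end Grid

section Telescoping

variable {n : ℕ}

lemma exists_enorm_eval_sub_eval_le_tsum (hn : 0 < n) (m : ℕ) :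
    ∃ C : ℝ≥0, ∀ f : Rn n → ℝ, AEStronglyMeasurable f → ∀ P : ℕ → MvPolynomial (Fin n) ℝ,
      (∀ l, (P l).totalDegree ≤ m) → ∀ (w : Rn n) (j : ℕ) (e : ℕ → ℝ≥0∞),
      (∀ l, polyDev f (P l) w (scale (j + l)) ≤ e l) → ∀ i, ∀ y ∈ closedBall w (scale (j + i)),
      ‖MvPolynomial.eval y (P i) - MvPolynomial.eval y (P 0)‖ₑ ≤ C * ∑' l, e l := by
  obtain ⟨C, hC⟩ := exists_enorm_eval_sub_eval_le hn m
  refine ⟨C * (1 + 2 ^ n), fun f hf P hP w j e he i y hy => ?_⟩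
  have hball (l : ℕ) : closedBall w (scale (j + (l + 1))) ⊆ closedBall w (scale (j + l)) :=
    closedBall_subset_closedBall (scale_antitone (by lia))
  have hcoarse (l : ℕ) : polyDev f (P l) w (scale (j + (l + 1))) ≤ 2 ^ n * e l :=
    (setLAverage_closedBall_le_mul (c := 2) (scale_pos _) (scale_pos _) (scale_eq_two_mul _).le
      (hball l)).trans (by simpa [polyDev] using mul_le_mul_right (he l) (2 ^ n))
  have hsum : ‖MvPolynomial.eval y (P i) - MvPolynomial.eval y (P 0)‖ₑ ≤
      ∑ l ∈ Finset.range i, C * (e (l + 1) + 2 ^ n * e l) := by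
    induction i with
    | zero => simp
    | succ i ih =>
      rw [Finset.sum_range_succ, add_comm (∑ l ∈ _, _),
        ← sub_add_sub_cancel _ (MvPolynomial.eval y (P i))]
      refine (enorm_add_le _ _).trans (add_le_add ?_ (ih (hball i hy)))
      refine (hC f hf _ _ (hP _) (hP _) w _ (scale_pos (j + (i + 1))) ?_ y hy).trans ?_
      · linarith [scale_le (j + (i + 1))]
      · gcongr
        exacts [he _, hcoarse i]
  calc _ ≤ ∑' l, C * (e (l + 1) + 2 ^ n * e l) := hsum.trans (ENNReal.sum_le_tsum _)
    _ = C * (∑' l, e (l + 1) + 2 ^ n * ∑' l, e l) := by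
        rw [ENNReal.tsum_mul_left, ENNReal.tsum_add, ENNReal.tsum_mul_left]
    _ ≤ C * (∑' l, e l + 2 ^ n * ∑' l, e l) := by
        gcongr _ * (?_ + _)
        exact ENNReal.tsum_comp_le_tsum_of_injective (add_left_injective 1) e
    _ = _ := by
        push_cast
        ring

lemma exists_enorm_sub_eval_le_tsum (hn : 0 < n) (m : ℕ) :
    ∃ C : ℝ≥0, ∀ f : Rn n → ℝ, LocallyIntegrable f → ∀ P : ℕ → MvPolynomial (Fin n) ℝ,
      (∀ l, (P l).totalDegree ≤ m) → ∀ (w : Rn n) (j : ℕ) (e : ℕ → ℝ≥0∞),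
      (∀ l, polyDev f (P l) w (scale (j + l)) ≤ e l) → ∀ v,
      Tendsto (fun r : ℝ => ⨍ y in closedBall w r, f y) (𝓝[>] 0) (𝓝 v) →
      ‖v - MvPolynomial.eval w (P 0)‖ₑ ≤ C * ∑' l, e l := by
  obtain ⟨C, hC⟩ := exists_enorm_eval_sub_eval_le_tsum hn m
  refine ⟨1 + C, fun f hf P hP w j e he v hv => ?_⟩
  refine enorm_sub_eval_le_of_tendsto_setAverage hf (P 0) (tendsto_scale_add j) hv fun i => ?_
  calc polyDev f (P 0) w (scale (j + i))
      ≤ e i + C * ∑' l, e l :=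
        (polyDev_le_polyDev_add hf.aestronglyMeasurable _ (P i) _ _).trans (add_le_add (he i)
          (setLAverage_le_of_forall_le isClosed_closedBall.measurableSet
            (hC f hf.aestronglyMeasurable P hP w j e he i)))
    _ ≤ ∑' l, e l + C * ∑' l, e l := by
        gcongr
        exact ENNReal.le_tsum i
    _ = (1 + C : ℝ≥0) * ∑' l, e l := by
        push_cast
        ring

end Telescoping

section PointwiseEstimate

variable {n : ℕ}

/-- The deviation of `f` on the cube of radius `4 hⱼ` around the grid point `z` of `x` from the
polynomial `P j z`, where `P` selects a polynomial for every scale and every cube center. -/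
def gridDev (f : Rn n → ℝ) (P : ℕ → Rn n → MvPolynomial (Fin n) ℝ) (j : ℕ) (x : Rn n) : ℝ≥0∞ :=
  polyDev f (P j (gridPoint (scale j) x)) (gridPoint (scale j) x) (4 * scale j)

/-- The sum of the deviations `gridDev` over the scales finer than `hⱼ`. -/
def tailDev (f : Rn n → ℝ) (P : ℕ → Rn n → MvPolynomial (Fin n) ℝ) (j : ℕ) (x : Rn n) : ℝ≥0∞ :=
  ∑' i, gridDev f P (j + i) x

lemma gridDev_le_tailDev (f : Rn n → ℝ) (P : ℕ → Rn n → MvPolynomial (Fin n) ℝ) (j : ℕ)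
    (x : Rn n) : gridDev f P j x ≤ tailDev f P j x :=
  ENNReal.le_tsum (f := fun i => gridDev f P (j + i) x) 0

lemma polyDev_scale_le_gridDev (f : Rn n → ℝ) (P : ℕ → Rn n → MvPolynomial (Fin n) ℝ) {j : ℕ}
    {w x : Rn n} (hwx : dist w x ≤ 2 * scale j) :
    polyDev f (P j (gridPoint (scale j) x)) w (scale j) ≤ 4 ^ n * gridDev f P j x := by
  have hpos := scale_pos j
  refine setLAverage_closedBall_le_mul (c := 4) hpos (by positivity) (by simp) ?_
  refine closedBall_subset_closedBall' ?_
  linarith [dist_triangle w x (gridPoint (scale j) x), dist_gridPoint_le hpos x]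

lemma exists_enorm_sub_eval_gridPoint_le (hn : 0 < n) (m : ℕ) :
    ∃ C : ℝ≥0, ∀ f : Rn n → ℝ, LocallyIntegrable f →
      ∀ P : ℕ → Rn n → MvPolynomial (Fin n) ℝ, (∀ j z, (P j z).totalDegree ≤ m) →
      ∀ (j : ℕ) (w : Rn n) (v : ℝ),
      Tendsto (fun r : ℝ => ⨍ y in closedBall w r, f y) (𝓝[>] 0) (𝓝 v) →
      ‖v - MvPolynomial.eval w (P j (gridPoint (scale j) w))‖ₑ ≤ C * tailDev f P j w := by
  obtain ⟨C, hC⟩ := exists_enorm_sub_eval_le_tsum hn m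
  refine ⟨C * 4 ^ n, fun f hf P hP j w v hv => ?_⟩
  have hdev (l : ℕ) : polyDev f (P (j + l) (gridPoint (scale (j + l)) w)) w (scale (j + l)) ≤
      4 ^ n * gridDev f P (j + l) w :=
    polyDev_scale_le_gridDev f P (by simpa using (scale_pos _).le)
  refine (hC f hf _ (fun l => hP _ _) w j _ hdev v hv).trans_eq ?_
  rw [ENNReal.tsum_mul_left, ← mul_assoc]
  simp [tailDev]

lemma exists_enorm_eval_gridPoint_le (hn : 0 < n) (m : ℕ) :
    ∃ C : ℝ≥0, ∀ f : Rn n → ℝ, LocallyIntegrable f →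
      ∀ P : ℕ → Rn n → MvPolynomial (Fin n) ℝ, (∀ j z, (P j z).totalDegree ≤ m) →
      ∀ (j : ℕ) (w x : Rn n), dist w x ≤ 2 * scale j →
      Tendsto (fun r : ℝ => ⨍ y in closedBall w r, f y) (𝓝[>] 0) (𝓝 0) →
      ‖MvPolynomial.eval w (P j (gridPoint (scale j) x))‖ₑ ≤
        C * (tailDev f P j x + tailDev f P j w) := by
  obtain ⟨C₁, hC₁⟩ := exists_enorm_eval_sub_eval_le hn m
  obtain ⟨C₂, hC₂⟩ := exists_enorm_sub_eval_gridPoint_le hn m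
  refine ⟨C₁ * 4 ^ n + C₂, fun f hf P hP j w x hwx hw => ?_⟩
  have hpos := scale_pos j
  set Px := P j (gridPoint (scale j) x)
  set Pw := P j (gridPoint (scale j) w)
  have hcompare : ‖MvPolynomial.eval w Px - MvPolynomial.eval w Pw‖ₑ ≤
      C₁ * (4 ^ n * tailDev f P j x + 4 ^ n * tailDev f P j w) := by
    refine (hC₁ f hf.aestronglyMeasurable Px Pw (hP _ _) (hP _ _) w _ hpos
      (by linarith [scale_le j]) w (mem_closedBall_self hpos.le)).trans ?_
    gcongr
    · exact (polyDev_scale_le_gridDev f P hwx).trans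
        (mul_le_mul_right (gridDev_le_tailDev f P j x) _)
    · exact (polyDev_scale_le_gridDev f P (by simpa using hpos.le)).trans
        (mul_le_mul_right (gridDev_le_tailDev f P j w) _)
  have hzero : ‖MvPolynomial.eval w Pw‖ₑ ≤ C₂ * tailDev f P j w := by
    simpa using hC₂ f hf P hP j w 0 hw
  calc ‖MvPolynomial.eval w Px‖ₑ
      = ‖MvPolynomial.eval w Px - MvPolynomial.eval w Pw + MvPolynomial.eval w Pw‖ₑ := by
        rw [sub_add_cancel]
    _ ≤ C₁ * (4 ^ n * tailDev f P j x + 4 ^ n * tailDev f P j w) + C₂ * tailDev f P j w :=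
        (enorm_add_le _ _).trans (add_le_add hcompare hzero)
    _ ≤ C₁ * (4 ^ n * tailDev f P j x + 4 ^ n * tailDev f P j w) +
        C₂ * (tailDev f P j x + tailDev f P j w) := by
        gcongr
        exact le_add_self
    _ = _ := by
        push_cast
        ring

variable {μ : Measure (Rn n)} {S : Set (Rn n)} {d : ℝ} {a b : ℝ≥0}

lemma AhlforsRegular.exists_enorm_le_tailDev (h : AhlforsRegular μ S d a b)
    (hd : (n : ℝ) - 1 < d) (hd0 : 0 < d) (hn : 0 < n) (m : ℕ) :
    ∃ C : ℝ≥0, ∀ f : Rn n → ℝ, LocallyIntegrable f →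
      ∀ P : ℕ → Rn n → MvPolynomial (Fin n) ℝ, (∀ j z, (P j z).totalDegree ≤ m) →
      (∀ᵐ w ∂μ, Tendsto (fun r : ℝ => ⨍ y in closedBall w r, f y) (𝓝[>] 0) (𝓝 0)) →
      ∀ (j : ℕ) (x w₀ : Rn n), w₀ ∈ S → dist x w₀ ≤ scale j →
      Tendsto (fun r : ℝ => ⨍ y in closedBall x r, f y) (𝓝[>] 0) (𝓝 (f x)) →
      ‖f x‖ₑ ≤ C * (tailDev f P j x + ENNReal.ofReal (scale j) ^ (-d) *
        ∫⁻ w in closedBall x (2 * scale j), tailDev f P j w ∂μ) := by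
  obtain ⟨C₁, hC₁⟩ := exists_enorm_sub_eval_gridPoint_le hn m
  obtain ⟨C₂, hC₂⟩ := exists_enorm_eval_gridPoint_le hn m
  obtain ⟨C₃, hC₃⟩ := h.exists_enorm_eval_le (by simpa using hd) hd0 m
  refine ⟨C₁ + C₃ * C₂ * b + C₃ * C₂, fun f hf P hP htr j x w₀ hw₀ hxw hx => ?_⟩
  have hpos := scale_pos j
  set D := tailDev f P j
  set H := ENNReal.ofReal (scale j)
  set Px := P j (gridPoint (scale j) x)
  set I := ∫⁻ w in closedBall x (2 * scale j), D w ∂μ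
  have hsub : closedBall w₀ (scale j) ⊆ closedBall x (2 * scale j) :=
    closedBall_subset_closedBall' (by linarith [dist_comm x w₀])
  have hint : ∫⁻ w in closedBall w₀ (scale j), ‖MvPolynomial.eval w Px‖ₑ ∂μ ≤
      C₂ * (D x * (b * H ^ d) + I) := by
    calc _ ≤ ∫⁻ w in closedBall w₀ (scale j), C₂ * (D x + D w) ∂μ := by
          refine setLIntegral_mono_ae' isClosed_closedBall.measurableSet ?_
          filter_upwards [htr] with w hw hwb using hC₂ f hf P hP j w x (hsub hwb) hw
      _ = C₂ * (D x * μ (closedBall w₀ (scale j)) + ∫⁻ w in closedBall w₀ (scale j), D w ∂μ) := by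
          rw [lintegral_const_mul' _ _ ENNReal.coe_ne_top, lintegral_add_left measurable_const,
            setLIntegral_const]
      _ ≤ C₂ * (D x * (b * H ^ d) + I) := by
          gcongr _ * (_ * ?_ + ?_)
          · exact h.measure_closedBall_le w₀ hw₀ _ hpos (by linarith [scale_le j])
          · exact lintegral_mono_set hsub
  calc ‖f x‖ₑ = ‖(f x - MvPolynomial.eval x Px) + MvPolynomial.eval x Px‖ₑ := by
        rw [sub_add_cancel]
    _ ≤ C₁ * D x + C₃ * (H ^ (-d) * (C₂ * (D x * (b * H ^ d) + I))) := by
        refine (enorm_add_le _ _).trans (add_le_add (hC₁ f hf P hP j x _ hx) ?_)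
        refine (hC₃ Px (hP _ _) w₀ hw₀ _ hpos (by linarith [scale_le j]) x hxw).trans ?_
        gcongr
    _ = C₁ * D x + C₃ * C₂ * b * (H ^ (-d) * H ^ d) * D x + C₃ * C₂ * (H ^ (-d) * I) := by ring
    _ ≤ (C₁ + C₃ * C₂ * b) * (D x + H ^ (-d) * I) + C₃ * C₂ * (D x + H ^ (-d) * I) := by
        rw [ofReal_rpow_neg_mul_rpow hpos, mul_one, ← add_mul]
        gcongr
        exacts [le_self_add, le_add_self]
    _ = _ := by
        push_cast
        ring

end PointwiseEstimate

section Tonelli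

lemma rpow_lintegral_le {α : Type*} [MeasurableSpace α] (ν : Measure α) {p : ℝ} (hp : 1 ≤ p)
    {F : α → ℝ≥0∞} (hF : AEMeasurable F ν) :
    (∫⁻ x, F x ∂ν) ^ p ≤ ν univ ^ (p - 1) * ∫⁻ x, F x ^ p ∂ν := by
  have hp0 : 0 < p := by linarith
  have h := eLpNorm'_le_eLpNorm'_mul_rpow_measure_univ one_pos hp hF.aestronglyMeasurable
  simp only [eLpNorm', enorm_eq_self, ENNReal.rpow_one, div_one] at h
  refine (ENNReal.rpow_le_rpow h hp0.le).trans_eq ?_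
  rw [ENNReal.mul_rpow_of_nonneg _ _ hp0.le, ← ENNReal.rpow_mul, ← ENNReal.rpow_mul, mul_comm]
  congr 2
  · field_simp
  · rw [one_div_mul_cancel hp0.ne', ENNReal.rpow_one]

lemma lintegral_lintegral_closedBall {X : Type*} [PseudoMetricSpace X] [SecondCountableTopology X]
    [MeasurableSpace X] [OpensMeasurableSpace X] (μ ν : Measure X) [SFinite μ] [SFinite ν]
    {G : X → ℝ≥0∞} (hG : Measurable G) (r : ℝ) :
    ∫⁻ x, ∫⁻ w in closedBall x r, G w ∂μ ∂ν = ∫⁻ w, G w * ν (closedBall w r) ∂μ := by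
  have hA : MeasurableSet {z : X × X | dist z.2 z.1 ≤ r} :=
    (isClosed_le (continuous_snd.dist continuous_fst) continuous_const).measurableSet
  calc _ = ∫⁻ x, ∫⁻ w, {z : X × X | dist z.2 z.1 ≤ r}.indicator (fun z => G z.2) (x, w) ∂μ ∂ν := by
        refine lintegral_congr fun x => ?_
        rw [← lintegral_indicator isClosed_closedBall.measurableSet]
        rfl
    _ = ∫⁻ w, ∫⁻ x, {z : X × X | dist z.2 z.1 ≤ r}.indicator (fun z => G z.2) (x, w) ∂ν ∂μ :=
        lintegral_lintegral_swap ((hG.comp measurable_snd).indicator hA).aemeasurable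
    _ = _ := by
        refine lintegral_congr fun w => ?_
        rw [← setLIntegral_const, ← lintegral_indicator isClosed_closedBall.measurableSet]
        exact lintegral_congr fun x => indicator_eq_indicator mem_closedBall'.symm rfl

lemma measurable_setLIntegral_closedBall {X : Type*} [PseudoMetricSpace X]
    [SecondCountableTopology X] [MeasurableSpace X] [OpensMeasurableSpace X] (μ : Measure X)
    [SFinite μ] {G : X → ℝ≥0∞} (hG : Measurable G) (r : ℝ) :
    Measurable fun x => ∫⁻ w in closedBall x r, G w ∂μ := by
  have hA : MeasurableSet {z : X × X | dist z.2 z.1 ≤ r} :=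
    (isClosed_le (continuous_snd.dist continuous_fst) continuous_const).measurableSet
  simp only [← lintegral_indicator isClosed_closedBall.measurableSet]
  exact ((hG.comp measurable_snd).indicator hA).lintegral_prod_right'

end Tonelli

section LocalPotentials

variable {n : ℕ} {μ : Measure (Rn n)} {d : ℝ} {b : ℝ≥0}

lemma IsFrostman.measure_closedBall_two_mul_scale_le (h : IsFrostman μ d b) (x : Rn n) (j : ℕ) :
    μ (closedBall x (2 * scale j)) ≤ b * (ENNReal.ofReal 2 ^ d * ENNReal.ofReal (scale j) ^ d) := by
  refine (h x _ (by linarith [scale_pos j]) (by linarith [scale_le j])).trans_eq ?_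
  rw [ENNReal.ofReal_mul zero_le_two,
    ENNReal.mul_rpow_of_ne_top ENNReal.ofReal_ne_top ENNReal.ofReal_ne_top]

lemma exists_tailDev_le_approxTail_add (m : ℕ) (f : Rn n → ℝ) {ε : ℝ≥0∞} (hε : ε ≠ 0) :
    ∃ P : ℕ → Rn n → MvPolynomial (Fin n) ℝ, (∀ j z, (P j z).totalDegree ≤ m) ∧
      ∀ j x, tailDev f P j x ≤ approxTail (m + 1) f j x + ε := by
  obtain ⟨δ, hδ, hδε⟩ := ENNReal.exists_pos_sum_of_countable' hε ℕ
  choose P hP hPδ using fun (j : ℕ) (z : Rn n) =>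
    exists_polyDev_le_localApprox_add m f z (4 * scale j) (hδ j).ne'
  refine ⟨P, hP, fun j x => ?_⟩
  calc tailDev f P j x ≤ ∑' i, (gridApprox (m + 1) f (j + i) x + δ (j + i)) :=
        ENNReal.tsum_le_tsum fun i => hPδ _ _
    _ ≤ approxTail (m + 1) f j x + ∑' i, δ i := by
        rw [ENNReal.tsum_add]
        refine add_le_add le_rfl ?_
        exact ENNReal.tsum_comp_le_tsum_of_injective (add_right_injective j) δ
    _ ≤ _ := add_le_add le_rfl hδε.le

/-- The mean of the tail `∑_{i ≥ j} Eᵢ` over the part of `S` within distance `2 hⱼ` of `x`, with the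
measure of that part replaced by its order of magnitude `hⱼᵈ`. -/
def tailMean (μ : Measure (Rn n)) (d : ℝ) (k : ℕ) (f : Rn n → ℝ) (j : ℕ) (x : Rn n) : ℝ≥0∞ :=
  ENNReal.ofReal (scale j) ^ (-d) * ∫⁻ w in closedBall x (2 * scale j), approxTail k f j w ∂μ

lemma measurable_tailMean (μ : Measure (Rn n)) [SFinite μ] (d : ℝ) (k : ℕ) (f : Rn n → ℝ) (j : ℕ) :
    Measurable (tailMean μ d k f j) :=
  (measurable_setLIntegral_closedBall μ (measurable_approxTail k f j) _).const_mul _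

lemma AhlforsRegular.exists_enorm_le_approxTail {S : Set (Rn n)} {a : ℝ≥0}
    (h : AhlforsRegular μ S d a b) (hd : (n : ℝ) - 1 < d) (hd0 : 0 < d) (hn : 0 < n) (m : ℕ) :
    ∃ C : ℝ≥0, ∀ f : Rn n → ℝ, LocallyIntegrable f →
      (∀ᵐ w ∂μ, Tendsto (fun r : ℝ => ⨍ y in closedBall w r, f y) (𝓝[>] 0) (𝓝 0)) →
      ∀ (j : ℕ) (x w₀ : Rn n), w₀ ∈ S → dist x w₀ ≤ scale j →
      Tendsto (fun r : ℝ => ⨍ y in closedBall x r, f y) (𝓝[>] 0) (𝓝 (f x)) →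
      ‖f x‖ₑ ≤ C * (approxTail (m + 1) f j x + tailMean μ d (m + 1) f j x) := by
  obtain ⟨C, hC⟩ := h.exists_enorm_le_tailDev hd hd0 hn m
  obtain ⟨B, hB⟩ : ∃ B : ℝ≥0, IsFrostman μ d B := ⟨_, h.isFrostman hd0.le⟩
  refine ⟨C, fun f hf htr j x w₀ hw₀ hxw hx => ?_⟩
  set A := approxTail (m + 1) f j
  set H := ENNReal.ofReal (scale j)
  set I := ∫⁻ w in closedBall x (2 * scale j), A w ∂μ
  set K : ℝ≥0∞ := 1 + B * 2 ^ d
  have hε (ε : ℝ≥0∞) (hε0 : ε ≠ 0) : ‖f x‖ₑ ≤ C * (A x + H ^ (-d) * I + K * ε) := by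
    obtain ⟨P, hP, hPε⟩ := exists_tailDev_le_approxTail_add m f hε0
    calc ‖f x‖ₑ ≤ C * (tailDev f P j x + H ^ (-d) *
          ∫⁻ w in closedBall x (2 * scale j), tailDev f P j w ∂μ) :=
          hC f hf P hP htr j x w₀ hw₀ hxw hx
      _ ≤ C * (A x + ε + H ^ (-d) * ∫⁻ w in closedBall x (2 * scale j), (A w + ε) ∂μ) := by
          gcongr
          exacts [hPε j x, hPε j _]
      _ ≤ C * (A x + ε + H ^ (-d) * (I + ε * (B * (2 ^ d * H ^ d)))) := by
          rw [lintegral_add_right _ measurable_const, setLIntegral_const]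
          gcongr
          simpa using hB.measure_closedBall_two_mul_scale_le x j
      _ = C * (A x + ε + H ^ (-d) * I + H ^ (-d) * H ^ d * (B * 2 ^ d * ε)) := by ring
      _ = _ := by
          rw [ofReal_rpow_neg_mul_rpow (scale_pos j)]
          ring
  have hK : K ≠ ⊤ := by finiteness
  have hlim : Tendsto (fun i : ℕ => C * (A x + H ^ (-d) * I + K * (i : ℝ≥0∞)⁻¹)) atTop
      (𝓝 (C * (A x + H ^ (-d) * I + K * 0))) :=
    ENNReal.Tendsto.const_mul (tendsto_const_nhds.add (ENNReal.Tendsto.const_mul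
      ENNReal.tendsto_inv_nat_nhds_zero (.inr hK))) (.inr ENNReal.coe_ne_top)
  simpa [tailMean] using ge_of_tendsto' hlim fun i => hε _ (by simp)

lemma IsFrostman.lintegral_rpow_setLIntegral_le [SFinite μ] (h : IsFrostman μ d b) {p : ℝ}
    (hp : 1 ≤ p) {F : Rn n → ℝ≥0∞} (hF : Measurable F) (j : ℕ) :
    ∫⁻ x, (ENNReal.ofReal (scale j) ^ (-d) * ∫⁻ w in closedBall x (2 * scale j), F w ∂μ) ^ p ≤
      (b * 2 ^ d) ^ (p - 1) * 4 ^ n *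
        (ENNReal.ofReal (scale j) ^ (n - d) * ∫⁻ w, F w ^ p ∂μ) := by
  have hpos := scale_pos j
  set H := ENNReal.ofReal (scale j) with hH
  have hH0 : H ≠ 0 := by simpa [hH] using hpos
  have hHtop : H ≠ ⊤ := ENNReal.ofReal_ne_top
  have hpoint (x : Rn n) : (H ^ (-d) * ∫⁻ w in closedBall x (2 * scale j), F w ∂μ) ^ p ≤
      H ^ (-d * p) * (b * (2 ^ d * H ^ d)) ^ (p - 1) *
        ∫⁻ w in closedBall x (2 * scale j), F w ^ p ∂μ := by
    rw [ENNReal.mul_rpow_of_nonneg _ _ (by linarith), ← ENNReal.rpow_mul, mul_assoc]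
    gcongr
    refine (rpow_lintegral_le _ hp hF.aemeasurable).trans ?_
    rw [Measure.restrict_apply_univ]
    gcongr ?_ * _
    refine ENNReal.rpow_le_rpow ?_ (by linarith)
    simpa using h.measure_closedBall_two_mul_scale_le x j
  have hvol (w : Rn n) : volume (closedBall w (2 * scale j)) = 4 ^ n * H ^ (n : ℝ) := by
    rw [volume_closedBall w (by positivity), ← mul_assoc, ENNReal.ofReal_mul (by norm_num), mul_pow,
      ENNReal.rpow_natCast, hH]
    norm_num
  calc _ ≤ ∫⁻ x, H ^ (-d * p) * (b * (2 ^ d * H ^ d)) ^ (p - 1) *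
        ∫⁻ w in closedBall x (2 * scale j), F w ^ p ∂μ := lintegral_mono hpoint
    _ = H ^ (-d * p) * (b * (2 ^ d * H ^ d)) ^ (p - 1) *
        (4 ^ n * H ^ (n : ℝ) * ∫⁻ w, F w ^ p ∂μ) := by
        rw [lintegral_const_mul' _ _ (by finiteness),
          lintegral_lintegral_closedBall _ _ (hF.pow_const p)]
        simp only [hvol]
        rw [lintegral_mul_const _ (hF.pow_const p), mul_comm (∫⁻ w, F w ^ p ∂μ)]
    _ = (b * 2 ^ d) ^ (p - 1) * 4 ^ n *
        (H ^ (-d * p) * H ^ (d * (p - 1)) * H ^ (n : ℝ) * ∫⁻ w, F w ^ p ∂μ) := by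
        rw [← mul_assoc (b : ℝ≥0∞), ENNReal.mul_rpow_of_nonneg _ _ (by linarith),
          ← ENNReal.rpow_mul]
        ring
    _ = _ := by
        rw [← ENNReal.rpow_add _ _ hH0 hHtop, ← ENNReal.rpow_add _ _ hH0 hHtop]
        ring_nf

end LocalPotentials

section Porosity

lemma AhlforsRegular.mul_measure_le {X : Type*} [MetricSpace X] [SecondCountableTopology X]
    [MeasurableSpace X] [BorelSpace X] {μ : Measure X} {S : Set X} {d : ℝ} {a b : ℝ≥0}
    (h : AhlforsRegular μ S d a b) [SFinite μ] (ν : Measure X) [SFinite ν] {A : Set X}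
    (hA : MeasurableSet A) {ρ : ℝ} (hρ : 0 < ρ) (hρ1 : ρ ≤ 1) (hAS : A ⊆ thickening ρ S)
    {V : ℝ≥0∞} (hV : ∀ x, ν (closedBall x (2 * ρ)) ≤ V) :
    a * ENNReal.ofReal ρ ^ d * ν A ≤ V * μ (cthickening (2 * ρ) A) := by
  have hlower : ∀ x ∈ A, a * ENNReal.ofReal ρ ^ d ≤ μ (closedBall x (2 * ρ)) := fun x hx => by
    obtain ⟨w, hw, hxw⟩ := mem_thickening_iff.1 (hAS hx)
    exact (h.le_measure_closedBall w hw ρ hρ hρ1).trans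
      (measure_mono (closedBall_subset_closedBall' (by rw [dist_comm]; linarith)))
  have hupper (w : X) : ν.restrict A (closedBall w (2 * ρ)) ≤
      (cthickening (2 * ρ) A).indicator (fun _ => V) w := by
    by_cases hw : w ∈ cthickening (2 * ρ) A
    · rw [indicator_of_mem hw]
      exact (Measure.restrict_apply_le _ _).trans (hV w)
    · rw [Measure.restrict_apply isClosed_closedBall.measurableSet]
      have hempty : closedBall w (2 * ρ) ∩ A = ∅ := eq_empty_of_forall_notMem fun x hx =>
        hw (mem_cthickening_of_dist_le w x _ A hx.2 (mem_closedBall'.1 hx.1))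
      simp [hempty]
  calc a * ENNReal.ofReal ρ ^ d * ν A ≤ ∫⁻ x in A, μ (closedBall x (2 * ρ)) ∂ν := by
        rw [← setLIntegral_const]
        exact setLIntegral_mono' hA hlower
    _ = ∫⁻ w, ν.restrict A (closedBall w (2 * ρ)) ∂μ := by
        simpa using lintegral_lintegral_closedBall μ (ν.restrict A)
          (measurable_const (a := (1 : ℝ≥0∞))) (2 * ρ)
    _ ≤ ∫⁻ w, (cthickening (2 * ρ) A).indicator (fun _ => V) w ∂μ := lintegral_mono hupper
    _ = V * μ (cthickening (2 * ρ) A) := by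
        rw [lintegral_indicator isClosed_cthickening.measurableSet, setLIntegral_const]

variable {n : ℕ} {μ : Measure (Rn n)} {S : Set (Rn n)} {d : ℝ} {a b : ℝ≥0}

lemma cthickening_gridCell_subset {h δ : ℝ} (hh : 0 < h) (hδ : 0 ≤ δ) (w : Rn n) :
    cthickening δ (gridCell h w) ⊆ closedBall w (δ + h) := by
  rw [← cthickening_closedBall hδ hh.le]
  exact cthickening_subset_of_subset _ fun x hx => dist_le_of_gridPoint_eq hh hx

lemma AhlforsRegular.volume_gridCell_inter_thickening_le (h : AhlforsRegular μ S d a b)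
    (hd : 0 ≤ d) {w : Rn n} (hw : w ∈ S) {ρ r : ℝ} (hρ : 0 < ρ) (hρr : ρ ≤ r) (hr : r ≤ 1 / 3) :
    volume (gridCell r w ∩ thickening ρ S) ≤
      ↑(a⁻¹ * b * (4 ^ n * 3 ^ d)) *
        (ENNReal.ofReal ρ ^ ((n : ℝ) - d) * ENNReal.ofReal r ^ d) := by
  have := h.sigmaFinite hd
  have hr0 : 0 < r := by linarith
  have hR0 : ENNReal.ofReal ρ ≠ 0 := by simpa using hρ
  have ha : (↑a⁻¹ : ℝ≥0∞) * a = 1 := by exact_mod_cast inv_mul_cancel₀ h.pos.ne'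
  have hmul := h.mul_measure_le volume
    ((measurableSet_gridCell r w).inter isOpen_thickening.measurableSet) hρ (by linarith)
    inter_subset_right (fun x => (volume_closedBall x (by linarith)).le)
  have hball : cthickening (2 * ρ) (gridCell r w ∩ thickening ρ S) ⊆ closedBall w (3 * r) :=
    (cthickening_subset_of_subset _ inter_subset_left).trans
      ((cthickening_gridCell_subset hr0 (by linarith) w).trans
        (closedBall_subset_closedBall (by linarith)))
  have hμ := (measure_mono hball).trans
    (h.measure_closedBall_le w hw (3 * r) (by linarith) (by linarith))
  calc volume (gridCell r w ∩ thickening ρ S)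
    _ = ↑a⁻¹ * ENNReal.ofReal ρ ^ (-d) *
        (a * ENNReal.ofReal ρ ^ d * volume (gridCell r w ∩ thickening ρ S)) := by
        rw [← mul_assoc, mul_mul_mul_comm, ha, ofReal_rpow_neg_mul_rpow hρ, one_mul, one_mul]
    _ ≤ ↑a⁻¹ * ENNReal.ofReal ρ ^ (-d) * (ENNReal.ofReal (2 * (2 * ρ)) ^ n *
        (b * ENNReal.ofReal (3 * r) ^ d)) := by
        gcongr _ * ?_
        exact hmul.trans (by gcongr)
    _ = ↑a⁻¹ * b * (4 ^ n * 3 ^ d) *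
        ((ENNReal.ofReal ρ ^ (n : ℝ) * ENNReal.ofReal ρ ^ (-d)) * ENNReal.ofReal r ^ d) := by
        rw [← mul_assoc 2 2 ρ, ENNReal.ofReal_mul (q := ρ) (by norm_num), mul_pow,
          ENNReal.ofReal_mul (q := r) (by norm_num), ENNReal.mul_rpow_of_nonneg _ _ hd,
          ENNReal.rpow_natCast]
        norm_num
        ring
    _ = _ := by
        rw [← ENNReal.rpow_add _ _ hR0 ENNReal.ofReal_ne_top, ← sub_eq_add_neg]
        push_cast [ENNReal.coe_rpow_of_nonneg _ hd]
        rfl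

/-- The points whose distance to `S` lies between `r` and `R`. -/
def shell (S : Set (Rn n)) (r R : ℝ) : Set (Rn n) := {x | r ≤ infDist x S ∧ infDist x S ≤ R}

lemma measurableSet_shell (S : Set (Rn n)) (r R : ℝ) : MeasurableSet (shell S r R) :=
  (measurable_infDist (s := S)) measurableSet_Icc

/-- As `d < n`, the points close to `S` fill only a small part of each cell: `S` is porous. -/
lemma AhlforsRegular.exists_le_volume_gridCell_inter_shell (h : AhlforsRegular μ S d a b)
    (hd0 : 0 ≤ d) (hd : d < n) :
    ∃ M : ℕ, ∀ j, ∀ w ∈ S, ENNReal.ofReal (scale j) ^ n / 2 ≤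
      volume (gridCell (scale j) w ∩ shell S (scale (j + M)) (scale j)) := by
  set K : ℝ≥0 := a⁻¹ * b * (4 ^ n * 3 ^ d)
  have hlim : Tendsto (fun M : ℕ => K * ((2⁻¹ : ℝ≥0∞) ^ ((n : ℝ) - d)) ^ M) atTop (𝓝 (K * 0)) :=
    ENNReal.Tendsto.const_mul (ENNReal.tendsto_pow_atTop_nhds_zero_of_lt_one
      (ENNReal.rpow_lt_one (by simp) (by linarith))) (.inr ENNReal.coe_ne_top)
  rw [mul_zero] at hlim
  obtain ⟨M, hM⟩ := (hlim.eventually (gt_mem_nhds (by simp : (0 : ℝ≥0∞) < 2⁻¹))).exists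
  refine ⟨M, fun j w hw => ?_⟩
  set H := ENNReal.ofReal (scale j) with hH
  have hH0 : H ≠ 0 := by simpa [hH] using scale_pos j
  have hclose : volume (gridCell (scale j) w ∩ thickening (scale (j + M)) S) ≤ H ^ n / 2 :=
    calc _ ≤ K * (ENNReal.ofReal (scale (j + M)) ^ ((n : ℝ) - d) * H ^ d) :=
          h.volume_gridCell_inter_thickening_le hd0 hw (scale_pos _)
            (scale_antitone (Nat.le_add_right j M)) (by linarith [scale_le j])
      _ = K * ((2⁻¹ : ℝ≥0∞) ^ ((n : ℝ) - d)) ^ M * (H ^ ((n : ℝ) - d) * H ^ d) := by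
          rw [ofReal_scale_add_rpow]
          ring
      _ ≤ 2⁻¹ * H ^ n := by
          rw [← ENNReal.rpow_add _ _ hH0 ENNReal.ofReal_ne_top, sub_add_cancel,
            ENNReal.rpow_natCast]
          gcongr
      _ = _ := by rw [mul_comm, ENNReal.div_eq_inv_mul, mul_comm]
  have hsub : gridCell (scale j) w \ thickening (scale (j + M)) S ⊆
      gridCell (scale j) w ∩ shell S (scale (j + M)) (scale j) := fun x hx =>
    ⟨hx.1, not_lt.1 fun hlt => hx.2 ((mem_thickening_iff_infDist_lt ⟨w, hw⟩).2 hlt),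
      (infDist_le_dist_of_mem hw).trans (dist_le_of_gridPoint_eq (scale_pos j) hx.1)⟩
  refine le_trans ?_ (measure_mono hsub)
  refine ENNReal.le_of_add_le_add_left (a := H ^ n / 2) (by finiteness) ?_
  calc H ^ n / 2 + H ^ n / 2 = H ^ n := ENNReal.add_halves _
    _ ≤ volume (gridCell (scale j) w) := le_volume_gridCell (scale_pos j) w
    _ ≤ _ := (measure_le_inter_add_sdiff _ _ _).trans (by gcongr)

lemma AhlforsRegular.exists_lintegral_le_setLIntegral_shell (h : AhlforsRegular μ S d a b)
    (hd0 : 0 ≤ d) (hd : d < n) :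
    ∃ (M : ℕ) (C : ℝ≥0), ∀ (φ : Rn n → ℝ≥0∞) (j : ℕ),
      ∫⁻ w, φ (gridPoint (scale j) w) ∂μ ≤ C * (ENNReal.ofReal (scale j) ^ (d - n) *
        ∫⁻ x in shell S (scale (j + M)) (scale j), φ (gridPoint (scale j) x)) := by
  have := h.sigmaFinite hd0
  obtain ⟨B, hB⟩ : ∃ B : ℝ≥0, IsFrostman μ d B := ⟨_, h.isFrostman hd0⟩
  obtain ⟨M, hM⟩ := h.exists_le_volume_gridCell_inter_shell hd0 hd
  refine ⟨M, 2 * B, fun φ j => ?_⟩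
  set H := ENNReal.ofReal (scale j) with hH
  have hH0 : H ≠ 0 := by simpa [hH] using scale_pos j
  set T := shell S (scale (j + M)) (scale j)
  set F := fun x => φ (gridPoint (scale j) x)
  have hF : Measurable F := measurable_comp_gridPoint φ (scale j)
  have hcell : ∀ w ∈ S, H ^ n / 2 * F w ≤
      ∫⁻ x in closedBall w (scale j), F x ∂volume.restrict T := fun w hw =>
    calc H ^ n / 2 * F w ≤ ∫⁻ _ in gridCell (scale j) w, F w ∂volume.restrict T := by
          rw [setLIntegral_const, Measure.restrict_apply (measurableSet_gridCell _ _), mul_comm]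
          gcongr
          exact hM j w hw
      _ = ∫⁻ x in gridCell (scale j) w, F x ∂volume.restrict T :=
          setLIntegral_congr_fun (measurableSet_gridCell _ _) fun x hx => congrArg φ hx.symm
      _ ≤ _ := lintegral_mono_set fun x hx => dist_le_of_gridPoint_eq (scale_pos j) hx
  have hint : H ^ n / 2 * ∫⁻ w, F w ∂μ ≤ B * H ^ d * ∫⁻ x in T, F x :=
    calc H ^ n / 2 * ∫⁻ w, F w ∂μ = ∫⁻ w, H ^ n / 2 * F w ∂μ := (lintegral_const_mul _ hF).symm
      _ ≤ ∫⁻ w, ∫⁻ x in closedBall w (scale j), F x ∂volume.restrict T ∂μ :=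
          lintegral_mono_ae (h.ae_mem.mono hcell)
      _ = ∫⁻ x in T, F x * μ (closedBall x (scale j)) :=
          lintegral_lintegral_closedBall _ _ hF _
      _ ≤ ∫⁻ x in T, F x * (B * H ^ d) := by
          gcongr with x
          exact hB x _ (scale_pos j) (by linarith [scale_le j])
      _ = _ := by rw [lintegral_mul_const _ hF, mul_comm]
  calc ∫⁻ w, F w ∂μ = 2 * H ^ (-(n : ℝ)) * (H ^ n / 2 * ∫⁻ w, F w ∂μ) := by
        rw [← ENNReal.rpow_natCast, ENNReal.div_eq_inv_mul, ← mul_assoc, mul_mul_mul_comm,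
          ENNReal.mul_inv_cancel two_ne_zero ENNReal.ofNat_ne_top,
          ofReal_rpow_neg_mul_rpow (scale_pos j), one_mul, one_mul]
    _ ≤ 2 * H ^ (-(n : ℝ)) * (B * H ^ d * ∫⁻ x in T, F x) := by gcongr
    _ = 2 * B * (H ^ (d + -(n : ℝ)) * ∫⁻ x in T, F x) := by
        rw [ENNReal.rpow_add _ _ hH0 ENNReal.ofReal_ne_top]
        ring
    _ = _ := by push_cast; rfl

end Porosity

section Overlap

lemma tsum_setLIntegral_le_of_encard_le {α ι : Type*} [MeasurableSpace α] [Countable ι]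
    (ν : Measure α) {s : ι → Set α} (hs : ∀ i, MeasurableSet (s i)) {N : ℕ∞}
    (hN : ∀ x, {i | x ∈ s i}.encard ≤ N) {G : α → ℝ≥0∞} (hG : Measurable G) :
    ∑' i, ∫⁻ x in s i, G x ∂ν ≤ N * ∫⁻ x, G x ∂ν := by
  calc ∑' i, ∫⁻ x in s i, G x ∂ν = ∫⁻ x, ∑' i, (s i).indicator G x ∂ν := by
        rw [lintegral_tsum fun i => (hG.indicator (hs i)).aemeasurable]
        simp only [lintegral_indicator (hs _)]
    _ ≤ ∫⁻ x, N * G x ∂ν := lintegral_mono fun x => by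
        calc ∑' i, (s i).indicator G x = ∑' _ : {i | x ∈ s i}, G x :=
              (tsum_subtype {i | x ∈ s i} fun _ => G x).symm
          _ = {i | x ∈ s i}.encard * G x := ENNReal.tsum_set_const _ _
          _ ≤ N * G x := by gcongr; exact_mod_cast hN x
    _ = N * ∫⁻ x, G x ∂ν := lintegral_const_mul _ hG

lemma encard_setOf_mem_shell_le {n : ℕ} (S : Set (Rn n)) (M : ℕ) (x : Rn n) :
    {j | x ∈ shell S (scale (j + M)) (scale j)}.encard ≤ (M + 1 : ℕ) := by
  rcases {j | x ∈ shell S (scale (j + M)) (scale j)}.eq_empty_or_nonempty with hempty | hne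
  · simp [hempty]
  set j₀ := sInf {j | x ∈ shell S (scale (j + M)) (scale j)}
  have hj₀ : scale (j₀ + M) ≤ infDist x S := (Nat.sInf_mem hne).1
  have hsub : {j | x ∈ shell S (scale (j + M)) (scale j)} ⊆ Finset.Icc j₀ (j₀ + M) := by
    intro j hj
    exact Finset.mem_coe.2 (Finset.mem_Icc.2
      ⟨Nat.sInf_le hj, scale_strictAnti.le_iff_ge.1 (hj₀.trans hj.2)⟩)
  refine (encard_le_encard hsub).trans_eq ?_
  rw [encard_coe_eq_coe_finsetCard, Nat.card_Icc]
  congr 1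
  lia

end Overlap

section DiscreteHardy

lemma tsum_two_inv_rpow_pow_ne_top {σ : ℝ} (hσ : 0 < σ) :
    ∑' i : ℕ, ((2⁻¹ : ℝ≥0∞) ^ σ) ^ i ≠ ⊤ := by
  rw [ENNReal.tsum_geometric, ENNReal.inv_ne_top]
  exact (tsub_pos_of_lt (ENNReal.rpow_lt_one (by simp) hσ)).ne'

lemma tsum_add_le_of_forall_le {e : ℕ → ℝ≥0∞} {σ : ℝ} {A : ℝ≥0∞} {j : ℕ}
    (he : ∀ l, j ≤ l → e l ≤ ENNReal.ofReal (scale l) ^ σ * A) :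
    ∑' i, e (j + i) ≤ (∑' i : ℕ, ((2⁻¹ : ℝ≥0∞) ^ σ) ^ i) * (ENNReal.ofReal (scale j) ^ σ * A) := by
  rw [← ENNReal.tsum_mul_right]
  refine ENNReal.tsum_le_tsum fun i => (he _ (Nat.le_add_right j i)).trans_eq ?_
  rw [ofReal_scale_add_rpow, mul_assoc]

lemma tsum_tsum_mul_add_le (θ g : ℕ → ℝ≥0∞) :
    ∑' j, ∑' i, θ i * g (j + i) ≤ (∑' i, θ i) * ∑' l, g l := by
  rw [ENNReal.tsum_comm, ← ENNReal.tsum_mul_right]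
  refine ENNReal.tsum_le_tsum fun i => ?_
  rw [ENNReal.tsum_mul_left]
  gcongr _ * ?_
  exact ENNReal.tsum_comp_le_tsum_of_injective (add_left_injective i) g

lemma rpow_tsum_add_le {p σ : ℝ} (hp : 0 < p) (e : ℕ → ℝ≥0∞) (j : ℕ) :
    (∑' i, e (j + i)) ^ p ≤ (∑' i : ℕ, ((2⁻¹ : ℝ≥0∞) ^ σ) ^ i) ^ p *
      (ENNReal.ofReal (scale j) ^ (σ * p) *
        ∑' i, ENNReal.ofReal (scale (j + i)) ^ (-(σ * p)) * e (j + i) ^ p) := by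
  set A := ∑' i, ENNReal.ofReal (scale (j + i)) ^ (-(σ * p)) * e (j + i) ^ p
  have he : ∀ l, j ≤ l → e l ≤ ENNReal.ofReal (scale l) ^ σ * A ^ p⁻¹ := fun l hl => by
    obtain ⟨i, rfl⟩ := Nat.exists_eq_add_of_le hl
    have hA : (ENNReal.ofReal (scale (j + i)) ^ (-σ) * e (j + i)) ^ p ≤ A := by
      rw [ENNReal.mul_rpow_of_nonneg _ _ hp.le, ← ENNReal.rpow_mul, neg_mul]
      exact ENNReal.le_tsum (f := fun i =>
        ENNReal.ofReal (scale (j + i)) ^ (-(σ * p)) * e (j + i) ^ p) i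
    calc e (j + i) = ENNReal.ofReal (scale (j + i)) ^ σ *
          (ENNReal.ofReal (scale (j + i)) ^ (-σ) * e (j + i)) := by
          rw [← mul_assoc, mul_comm (_ ^ σ), ofReal_rpow_neg_mul_rpow (scale_pos _), one_mul]
      _ ≤ _ := by
          gcongr
          exact (ENNReal.le_rpow_inv_iff hp).2 hA
  refine (ENNReal.rpow_le_rpow (tsum_add_le_of_forall_le he) hp.le).trans_eq ?_
  rw [ENNReal.mul_rpow_of_nonneg _ _ hp.le, ENNReal.mul_rpow_of_nonneg _ _ hp.le,
    ← ENNReal.rpow_mul, ← ENNReal.rpow_mul, inv_mul_cancel₀ hp.ne', ENNReal.rpow_one]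

lemma ofReal_scale_rpow_neg_eq (j i : ℕ) (σ : ℝ) :
    ENNReal.ofReal (scale j) ^ (-σ) =
      ((2⁻¹ : ℝ≥0∞) ^ σ) ^ i * ENNReal.ofReal (scale (j + i)) ^ (-σ) := by
  rw [ofReal_scale_add_rpow, ← mul_assoc, ← mul_pow, ← ENNReal.rpow_add _ _ (by simp) (by simp),
    add_neg_cancel, ENNReal.rpow_zero, one_pow, one_mul]

lemma ofReal_rpow_neg_mul_rpow_tsum_add_le {p : ℝ} (hp : 0 < p) (γ : ℝ) (e : ℕ → ℝ≥0∞) (j : ℕ) :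
    ENNReal.ofReal (scale j) ^ (-γ) * (∑' i, e (j + i)) ^ p ≤
      (∑' i : ℕ, ((2⁻¹ : ℝ≥0∞) ^ (γ / 2 / p)) ^ i) ^ p * ∑' i, ((2⁻¹ : ℝ≥0∞) ^ (γ / 2)) ^ i *
        (ENNReal.ofReal (scale (j + i)) ^ (-γ) * e (j + i) ^ p) := by
  set c := ∑' i : ℕ, ((2⁻¹ : ℝ≥0∞) ^ (γ / 2 / p)) ^ i
  set H : ℕ → ℝ≥0∞ := fun l => ENNReal.ofReal (scale l) with hH
  have hneg (l : ℕ) : H l ^ (-γ) = H l ^ (-(γ / 2)) * H l ^ (-(γ / 2)) := by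
    rw [← ENNReal.rpow_add _ _ (by simpa [hH] using scale_pos l) ENNReal.ofReal_ne_top,
      ← neg_add, add_halves]
  calc H j ^ (-γ) * (∑' i, e (j + i)) ^ p
    _ ≤ H j ^ (-γ) * (c ^ p * (H j ^ (γ / 2) * ∑' i, H (j + i) ^ (-(γ / 2)) * e (j + i) ^ p)) := by
      gcongr _ * ?_
      simpa only [div_mul_cancel₀ _ hp.ne'] using rpow_tsum_add_le (σ := γ / 2 / p) hp e j
    _ = c ^ p * (H j ^ (-(γ / 2)) * H j ^ (γ / 2) *
        (H j ^ (-(γ / 2)) * ∑' i, H (j + i) ^ (-(γ / 2)) * e (j + i) ^ p)) := by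
      rw [hneg]
      ring
    _ = c ^ p * ∑' i, ((2⁻¹ : ℝ≥0∞) ^ (γ / 2)) ^ i * (H (j + i) ^ (-γ) * e (j + i) ^ p) := by
      rw [ofReal_rpow_neg_mul_rpow (scale_pos j), one_mul, ← ENNReal.tsum_mul_left]
      congr! 3 with i
      rw [hneg (j + i), hH, ofReal_scale_rpow_neg_eq j i]
      ring

lemma discrete_hardy_inequality {p γ : ℝ} (hp : 0 < p) (hγ : 0 < γ) :
    ∃ C : ℝ≥0, ∀ e : ℕ → ℝ≥0∞,
      ∑' j, ENNReal.ofReal (scale j) ^ (-γ) * (∑' i, e (j + i)) ^ p ≤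
        C * ∑' l, ENNReal.ofReal (scale l) ^ (-γ) * e l ^ p := by
  set c := ∑' i : ℕ, ((2⁻¹ : ℝ≥0∞) ^ (γ / 2 / p)) ^ i
  set θ := (2⁻¹ : ℝ≥0∞) ^ (γ / 2)
  have hc : c ≠ ⊤ := tsum_two_inv_rpow_pow_ne_top (by positivity)
  have hθ : ∑' i, θ ^ i ≠ ⊤ := tsum_two_inv_rpow_pow_ne_top (half_pos hγ)
  lift c ^ p * ∑' i, θ ^ i to ℝ≥0 using by finiteness with C hC
  refine ⟨C, fun e => ?_⟩
  set g : ℕ → ℝ≥0∞ := fun l => ENNReal.ofReal (scale l) ^ (-γ) * e l ^ p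
  calc ∑' j, ENNReal.ofReal (scale j) ^ (-γ) * (∑' i, e (j + i)) ^ p
    _ ≤ c ^ p * ∑' j, ∑' i, θ ^ i * g (j + i) := by
      rw [← ENNReal.tsum_mul_left]
      exact ENNReal.tsum_le_tsum (ofReal_rpow_neg_mul_rpow_tsum_add_le hp γ e)
    _ ≤ c ^ p * ((∑' i, θ ^ i) * ∑' l, g l) := by
      gcongr
      exact tsum_tsum_mul_add_le (fun i => θ ^ i) g
    _ = C * ∑' l, g l := by rw [← mul_assoc, hC]

lemma lintegral_discrete_hardy_inequality {α : Type*} [MeasurableSpace α] (ν : Measure α)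
    {p γ : ℝ} (hp : 0 < p) (hγ : 0 < γ) :
    ∃ C : ℝ≥0, ∀ E : ℕ → α → ℝ≥0∞, (∀ j, Measurable (E j)) →
      ∑' j, ENNReal.ofReal (scale j) ^ (-γ) * ∫⁻ x, (∑' i, E (j + i) x) ^ p ∂ν ≤
        C * ∑' l, ENNReal.ofReal (scale l) ^ (-γ) * ∫⁻ x, E l x ^ p ∂ν := by
  obtain ⟨C, hC⟩ := discrete_hardy_inequality hp hγ
  refine ⟨C, fun E hE => ?_⟩
  have hlow (l : ℕ) : Measurable fun x => E l x ^ p := (hE l).pow_const p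
  have hsum (j : ℕ) : Measurable fun x => (∑' i, E (j + i) x) ^ p :=
    (Measurable.tsum fun i => hE (j + i)).pow_const p
  simp only [← lintegral_const_mul _ (hlow _), ← lintegral_const_mul _ (hsum _)]
  rw [← lintegral_tsum fun j => ((hsum j).const_mul _).aemeasurable,
    ← lintegral_tsum fun l => ((hlow l).const_mul _).aemeasurable,
    ← lintegral_const_mul _ (Measurable.tsum fun l => (hlow l).const_mul _)]
  exact lintegral_mono fun x => hC fun l => E l x

end DiscreteHardy

section SharpMaximal

variable {n : ℕ}

/-- The function `g` of the Triebel–Lizorkin norm, for approximation by polynomials of degree less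
than `k`. -/
def tlFunctional (k : ℕ) (s q : ℝ) (f : Rn n → ℝ) (x : Rn n) : ℝ≥0∞ :=
  (∫⁻ t in Ioo (0 : ℝ) 1, (ENNReal.ofReal (t ^ (-s)) * localApprox k 1 f x t) ^ q *
    ENNReal.ofReal t⁻¹) ^ (1 / q)

/-- The fractional sharp maximal function `supⱼ hⱼ⁻ˢ Eⱼ`, over the dyadic scales only and with the
cubes centred on the grids, so that it is measurable. -/
def fracMaximal (k : ℕ) (s : ℝ) (f : Rn n → ℝ) (x : Rn n) : ℝ≥0∞ :=
  ⨆ j, ENNReal.ofReal (scale j) ^ (-s) * gridApprox k f j x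

lemma measurable_fracMaximal (k : ℕ) (s : ℝ) (f : Rn n → ℝ) : Measurable (fracMaximal k s f) :=
  .iSup fun j => (measurable_gridApprox k f j).const_mul _

lemma gridApprox_le_fracMaximal (k : ℕ) (s : ℝ) (f : Rn n → ℝ) (j : ℕ) (x : Rn n) :
    gridApprox k f j x ≤ ENNReal.ofReal (scale j) ^ s * fracMaximal k s f x := by
  calc gridApprox k f j x = ENNReal.ofReal (scale j) ^ s *
        (ENNReal.ofReal (scale j) ^ (-s) * gridApprox k f j x) := by
        rw [← mul_assoc, mul_comm (_ ^ s), ofReal_rpow_neg_mul_rpow (scale_pos j), one_mul]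
    _ ≤ _ := by
        gcongr
        exact le_iSup (fun j => ENNReal.ofReal (scale j) ^ (-s) * gridApprox k f j x) j

lemma approxTail_le_fracMaximal (k : ℕ) (s : ℝ) (f : Rn n → ℝ) (j : ℕ) (x : Rn n) :
    approxTail k f j x ≤ (∑' i : ℕ, ((2⁻¹ : ℝ≥0∞) ^ s) ^ i) *
      (ENNReal.ofReal (scale j) ^ s * fracMaximal k s f x) :=
  tsum_add_le_of_forall_le fun l _ => gridApprox_le_fracMaximal k s f l x

lemma le_mul_lintegral_Ioo_rpow {q r : ℝ} (hq : 0 < q) (hr : 0 < r) (hr1 : 2 * r ≤ 1)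
    {φ : ℝ → ℝ≥0∞} {B : ℝ≥0∞} {c : ℝ≥0} (hB : ∀ t ∈ Ico r (2 * r), B ≤ c * φ t) :
    B ≤ c * 2 ^ (1 / q) * (∫⁻ t in Ioo (0 : ℝ) 1, φ t ^ q * ENNReal.ofReal t⁻¹) ^ (1 / q) := by
  set I := ∫⁻ t in Ioo (0 : ℝ) 1, φ t ^ q * ENNReal.ofReal t⁻¹
  have hlog : ∫⁻ _ in Ico r (2 * r), ENNReal.ofReal (2 * r)⁻¹ = 2⁻¹ := by
    rw [setLIntegral_const, Real.volume_Ico, ← ENNReal.ofReal_mul (by positivity),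
      ← ENNReal.ofReal_ofNat, ← ENNReal.ofReal_inv_of_pos zero_lt_two]
    congr 1
    field_simp
    ring
  have hint : B ^ q * 2⁻¹ ≤ c ^ q * I :=
    calc B ^ q * 2⁻¹ = ∫⁻ _ in Ico r (2 * r), B ^ q * ENNReal.ofReal (2 * r)⁻¹ := by
          rw [lintegral_const_mul _ measurable_const, hlog]
      _ ≤ ∫⁻ t in Ico r (2 * r), c ^ q * (φ t ^ q * ENNReal.ofReal t⁻¹) := by
          refine setLIntegral_mono' measurableSet_Ico fun t ht => ?_
          rw [← mul_assoc, ← ENNReal.mul_rpow_of_nonneg _ _ hq.le]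
          gcongr
          exacts [hB t ht, hr.trans_le ht.1, ht.2.le]
      _ = c ^ q * ∫⁻ t in Ico r (2 * r), φ t ^ q * ENNReal.ofReal t⁻¹ :=
          lintegral_const_mul' _ _ (by finiteness)
      _ ≤ c ^ q * I := by
          gcongr
          exact lintegral_mono_set fun t ht => ⟨hr.trans_le ht.1, ht.2.trans_le hr1⟩
  calc B ≤ (c ^ q * I * 2) ^ (1 / q) := by
        rw [one_div, ENNReal.le_rpow_inv_iff hq]
        rwa [← div_eq_mul_inv, ENNReal.div_le_iff two_ne_zero ENNReal.ofNat_ne_top] at hint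
    _ = _ := by
        rw [ENNReal.mul_rpow_of_nonneg _ _ (by positivity),
          ENNReal.mul_rpow_of_nonneg _ _ (by positivity), ← ENNReal.rpow_mul,
          mul_one_div_cancel hq.ne', ENNReal.rpow_one]
        ring

lemma gridApprox_le_mul_localApprox (k : ℕ) (f : Rn n → ℝ) (j : ℕ) (x : Rn n) {t : ℝ}
    (ht : t ∈ Ico (5 * scale j) (10 * scale j)) :
    gridApprox k f j x ≤ 3 ^ n * localApprox k 1 f x t := by
  have hpos := scale_pos j
  refine localApprox_one_le_mul (c := 3) k f three_ne_zero (by positivity)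
    (by linarith [ht.1]) ?_ (closedBall_subset_closedBall' ?_)
  · rw [NNReal.coe_ofNat]
    linarith [ht.2]
  · rw [dist_comm]
    linarith [dist_gridPoint_le hpos x, ht.1]

lemma exists_fracMaximal_le_tlFunctional (n : ℕ) {s q : ℝ} (hs : 0 ≤ s) (hq : 0 < q) :
    ∃ C : ℝ≥0, ∀ (k : ℕ) (f : Rn n → ℝ) (x : Rn n),
      fracMaximal k s f x ≤ C * tlFunctional k s q f x := by
  lift (10 ^ s * (3 ^ n * 2 ^ (1 / q)) : ℝ≥0∞) to ℝ≥0 using by finiteness with C hC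
  refine ⟨C, fun k f x => iSup_le fun j => ?_⟩
  have hpos := scale_pos j
  have hlocal : ∀ t ∈ Ico (5 * scale j) (2 * (5 * scale j)),
      ENNReal.ofReal (10 * scale j) ^ (-s) * gridApprox k f j x ≤
        ↑(3 ^ n : ℝ≥0) * (ENNReal.ofReal (t ^ (-s)) * localApprox k 1 f x t) := fun t ht => by
    rw [← mul_assoc 2, show (2 : ℝ) * 5 = 10 by norm_num] at ht
    have ht0 : 0 < t := by linarith [ht.1]
    rw [ENNReal.ofReal_rpow_of_pos (by positivity), mul_left_comm]
    push_cast
    exact mul_le_mul'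
      (ENNReal.ofReal_le_ofReal (Real.rpow_le_rpow_of_nonpos ht0 ht.2.le (by linarith)))
      (gridApprox_le_mul_localApprox k f j x ht)
  have hten : (10 : ℝ≥0∞) ^ s * 10 ^ (-s) = 1 := by
    rw [← ENNReal.rpow_add _ _ (by simp) (by simp), add_neg_cancel, ENNReal.rpow_zero]
  calc ENNReal.ofReal (scale j) ^ (-s) * gridApprox k f j x
    _ = 10 ^ s * (ENNReal.ofReal (10 * scale j) ^ (-s) * gridApprox k f j x) := by
      rw [ENNReal.ofReal_mul (by norm_num), ENNReal.ofReal_ofNat,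
        ENNReal.mul_rpow_of_ne_top (by simp) (by simp), ← mul_assoc, ← mul_assoc, hten, one_mul]
    _ ≤ 10 ^ s * (↑(3 ^ n : ℝ≥0) * 2 ^ (1 / q) * tlFunctional k s q f x) := by
      gcongr _ * ?_
      exact le_mul_lintegral_Ioo_rpow hq (by positivity) (by linarith [scale_le j]) hlocal
    _ = _ := by
      rw [hC]
      push_cast
      ring

end SharpMaximal

section HardyInequality

lemma ofReal_rpow_div_rpow_le {p σ r D : ℝ} (hp : 0 ≤ p) (hσ : 0 ≤ σ) (hr : 0 < r) (hrD : r ≤ D)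
    (y : ℝ) : ENNReal.ofReal (|y| ^ p / D ^ σ) ≤ ENNReal.ofReal r ^ (-σ) * ‖y‖ₑ ^ p := by
  rw [Real.enorm_eq_ofReal_abs, ENNReal.ofReal_rpow_of_nonneg (abs_nonneg y) hp,
    ENNReal.ofReal_rpow_of_pos hr, ← ENNReal.ofReal_mul (by positivity), Real.rpow_neg hr.le,
    div_eq_inv_mul]
  gcongr

lemma exists_scale_lt_le {D : ℝ} (hD : 0 < D) (hD0 : D ≤ scale 0) :
    ∃ j, scale (j + 1) < D ∧ D ≤ scale j := by
  obtain ⟨j, hlt, hle⟩ := exists_nat_pow_near_of_lt_one (x := D / scale 0) (y := 1 / 2)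
    (div_pos hD (scale_pos 0)) ((div_le_one (scale_pos 0)).2 hD0) (by norm_num) (by norm_num)
  rw [lt_div_iff₀ (scale_pos 0), ← scale_add, zero_add] at hlt
  rw [div_le_iff₀ (scale_pos 0), ← scale_add, zero_add] at hle
  exact ⟨j, hlt, hle⟩

variable {n : ℕ} {μ : Measure (Rn n)} {S : Set (Rn n)} {d p s : ℝ} {a b : ℝ≥0}

lemma AhlforsRegular.exists_tsum_mul_lintegral_approxTail_rpow_le (h : AhlforsRegular μ S d a b)
    (hd0 : 0 ≤ d) (hd : d < n) (hp : 0 < p) (hs : n - d < s * p) :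
    ∃ C : ℝ≥0, ∀ (k : ℕ) (f : Rn n → ℝ),
      ∑' j, ENNReal.ofReal (scale j) ^ (-(s * p - (n - d))) * ∫⁻ w, approxTail k f j w ^ p ∂μ ≤
        C * ∫⁻ x, fracMaximal k s f x ^ p := by
  obtain ⟨A, hA⟩ := lintegral_discrete_hardy_inequality μ hp (sub_pos.2 hs)
  obtain ⟨M, B, hB⟩ := h.exists_lintegral_le_setLIntegral_shell hd0 hd
  refine ⟨A * (B * (M + 1 : ℕ)), fun k f => ?_⟩
  have hshell (l : ℕ) : ENNReal.ofReal (scale l) ^ (-(s * p - (n - d))) *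
      ∫⁻ w, gridApprox k f l w ^ p ∂μ ≤
        B * ∫⁻ x in shell S (scale (l + M)) (scale l), fracMaximal k s f x ^ p := by
    set H := ENNReal.ofReal (scale l) with hH
    have hH0 : H ≠ 0 := by simpa [hH] using scale_pos l
    set T := shell S (scale (l + M)) (scale l)
    calc H ^ (-(s * p - (n - d))) * ∫⁻ w, gridApprox k f l w ^ p ∂μ
      _ ≤ H ^ (-(s * p - (n - d))) * (B * (H ^ (d - n) * ∫⁻ x in T, gridApprox k f l x ^ p)) := by
        gcongr _ * ?_
        exact hB (fun z => localApprox k 1 f z (4 * scale l) ^ p) l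
      _ = B * ((H ^ (-(s * p - (n - d))) * H ^ (d - n)) * ∫⁻ x in T, gridApprox k f l x ^ p) := by
        ring
      _ = B * ∫⁻ x in T, (H ^ (-s) * gridApprox k f l x) ^ p := by
        simp only [ENNReal.mul_rpow_of_nonneg _ _ hp.le]
        rw [lintegral_const_mul _ ((measurable_gridApprox k f l).pow_const p), ← ENNReal.rpow_mul,
          ← ENNReal.rpow_add _ _ hH0 ENNReal.ofReal_ne_top]
        ring_nf
      _ ≤ B * ∫⁻ x in T, fracMaximal k s f x ^ p := by
        gcongr with x
        exact le_iSup (fun j => ENNReal.ofReal (scale j) ^ (-s) * gridApprox k f j x) l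
  calc _ ≤ A * ∑' l, ENNReal.ofReal (scale l) ^ (-(s * p - (n - d))) *
        ∫⁻ w, gridApprox k f l w ^ p ∂μ := hA (gridApprox k f) (measurable_gridApprox k f)
    _ ≤ A * (B * ∑' l, ∫⁻ x in shell S (scale (l + M)) (scale l), fracMaximal k s f x ^ p) := by
        gcongr _ * ?_
        rw [← ENNReal.tsum_mul_left]
        exact ENNReal.tsum_le_tsum hshell
    _ ≤ A * (B * ((M + 1 : ℕ) * ∫⁻ x, fracMaximal k s f x ^ p)) := by
        gcongr _ * (_ * ?_)
        exact_mod_cast tsum_setLIntegral_le_of_encard_le volume (fun l => measurableSet_shell S _ _)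
          (encard_setOf_mem_shell_le S M) ((measurable_fracMaximal k s f).pow_const p)
    _ = _ := by
        push_cast
        ring

lemma AhlforsRegular.exists_tsum_mul_lintegral_tailMean_rpow_le (h : AhlforsRegular μ S d a b)
    (hd0 : 0 ≤ d) (hd : d < n) (hp : 1 ≤ p) (hs : n - d < s * p) :
    ∃ C : ℝ≥0, ∀ (k : ℕ) (f : Rn n → ℝ),
      ∑' j, ENNReal.ofReal (scale j) ^ (-(s * p)) * ∫⁻ x, tailMean μ d k f j x ^ p ≤
        C * ∫⁻ x, fracMaximal k s f x ^ p := by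
  have := h.sigmaFinite hd0
  obtain ⟨B, hB⟩ : ∃ B : ℝ≥0, IsFrostman μ d B := ⟨_, h.isFrostman hd0⟩
  obtain ⟨A, hA⟩ := h.exists_tsum_mul_lintegral_approxTail_rpow_le hd0 hd (by linarith) hs
  have hp1 : 0 ≤ p - 1 := sub_nonneg.2 hp
  lift ((B * 2 ^ d) ^ (p - 1) * 4 ^ n : ℝ≥0∞) to ℝ≥0 using by finiteness with K hK
  refine ⟨K * A, fun k f => ?_⟩
  have hmean (j : ℕ) : ENNReal.ofReal (scale j) ^ (-(s * p)) * ∫⁻ x, tailMean μ d k f j x ^ p ≤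
      K * (ENNReal.ofReal (scale j) ^ (-(s * p - (n - d))) * ∫⁻ w, approxTail k f j w ^ p ∂μ) := by
    have hH0 : ENNReal.ofReal (scale j) ≠ 0 := by simpa using scale_pos j
    rw [neg_sub, sub_eq_neg_add, ENNReal.rpow_add _ _ hH0 ENNReal.ofReal_ne_top, mul_assoc,
      mul_left_comm, hK]
    gcongr _ * ?_
    exact hB.lintegral_rpow_setLIntegral_le hp (measurable_approxTail k f j) j
  calc _ ≤ K * ∑' j, ENNReal.ofReal (scale j) ^ (-(s * p - (n - d))) *
        ∫⁻ w, approxTail k f j w ^ p ∂μ := by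
        rw [← ENNReal.tsum_mul_left]
        exact ENNReal.tsum_le_tsum hmean
    _ ≤ K * (A * ∫⁻ x, fracMaximal k s f x ^ p) := by
        gcongr _ * ?_
        exact hA k f
    _ = _ := by
        push_cast
        ring

lemma ae_tendsto_setAverage_closedBall {f : Rn n → ℝ} (hf : LocallyIntegrable f) :
    ∀ᵐ x, Tendsto (fun r : ℝ => ⨍ y in closedBall x r, f y) (𝓝[>] 0) (𝓝 (f x)) := by
  filter_upwards [IsUnifLocDoublingMeasure.ae_tendsto_average volume hf 1] with x hx
  refine hx (fun _ => x) id tendsto_id ?_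
  filter_upwards [self_mem_nhdsWithin] with r hr
  exact mem_closedBall_self (mul_nonneg zero_le_one (le_of_lt hr))

lemma rpow_mul_approxTail_rpow_le_fracMaximal (hp : 0 ≤ p) (k : ℕ) (f : Rn n → ℝ) (j : ℕ)
    (x : Rn n) :
    ENNReal.ofReal (scale j) ^ (-(s * p)) * approxTail k f j x ^ p ≤
      (∑' i : ℕ, ((2⁻¹ : ℝ≥0∞) ^ s) ^ i) ^ p * fracMaximal k s f x ^ p := by
  rw [← neg_mul, ENNReal.rpow_mul, ← ENNReal.mul_rpow_of_nonneg _ _ hp,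
    ← ENNReal.mul_rpow_of_nonneg _ _ hp]
  refine ENNReal.rpow_le_rpow ?_ hp
  calc ENNReal.ofReal (scale j) ^ (-s) * approxTail k f j x
    _ ≤ ENNReal.ofReal (scale j) ^ (-s) * ((∑' i : ℕ, ((2⁻¹ : ℝ≥0∞) ^ s) ^ i) *
        (ENNReal.ofReal (scale j) ^ s * fracMaximal k s f x)) := by
      gcongr
      exact approxTail_le_fracMaximal k s f j x
    _ = _ := by
      rw [mul_left_comm, ← mul_assoc (_ ^ (-s)), ofReal_rpow_neg_mul_rpow (scale_pos j), one_mul]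

lemma AhlforsRegular.exists_rpow_mul_enorm_rpow_le (h : AhlforsRegular μ S d a b)
    (hd : (n : ℝ) - 1 < d) (hd0 : 0 < d) (hn : 0 < n) (hp : 1 ≤ p) (hs : 0 < s) (m : ℕ) :
    ∃ K : ℝ≥0, ∀ f : Rn n → ℝ, LocallyIntegrable f →
      (∀ᵐ w ∂μ, Tendsto (fun r : ℝ => ⨍ y in closedBall w r, f y) (𝓝[>] 0) (𝓝 0)) →
      ∀ (j : ℕ) (x w₀ : Rn n), w₀ ∈ S → dist x w₀ ≤ scale j →
      Tendsto (fun r : ℝ => ⨍ y in closedBall x r, f y) (𝓝[>] 0) (𝓝 (f x)) →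
      ENNReal.ofReal (scale j) ^ (-(s * p)) * ‖f x‖ₑ ^ p ≤
        K * (fracMaximal (m + 1) s f x ^ p +
          ENNReal.ofReal (scale j) ^ (-(s * p)) * tailMean μ d (m + 1) f j x ^ p) := by
  have hp0 : 0 ≤ p := by linarith
  obtain ⟨C, hC⟩ := h.exists_enorm_le_approxTail hd hd0 hn m
  set c := ∑' i : ℕ, ((2⁻¹ : ℝ≥0∞) ^ s) ^ i
  have hc : c ≠ ⊤ := tsum_two_inv_rpow_pow_ne_top hs
  lift C ^ p * 2 ^ (p - 1) * (c ^ p + 1) to ℝ≥0 using by finiteness with K hK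
  refine ⟨K, fun f hf htr j x w₀ hw₀ hxw hx => ?_⟩
  set H := ENNReal.ofReal (scale j)
  set F := approxTail (m + 1) f j x
  set V := tailMean μ d (m + 1) f j x
  set G := fracMaximal (m + 1) s f x
  calc H ^ (-(s * p)) * ‖f x‖ₑ ^ p
    _ ≤ H ^ (-(s * p)) * (C ^ p * (2 ^ (p - 1) * (F ^ p + V ^ p))) := by
      gcongr _ * ?_
      refine (ENNReal.rpow_le_rpow (hC f hf htr j x w₀ hw₀ hxw hx) hp0).trans ?_
      rw [ENNReal.mul_rpow_of_nonneg _ _ hp0]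
      gcongr _ * ?_
      exact ENNReal.rpow_add_le_mul_rpow_add_rpow _ _ hp
    _ = C ^ p * 2 ^ (p - 1) * (H ^ (-(s * p)) * F ^ p + H ^ (-(s * p)) * V ^ p) := by ring
    _ ≤ C ^ p * 2 ^ (p - 1) * ((c ^ p + 1) * G ^ p + (c ^ p + 1) * (H ^ (-(s * p)) * V ^ p)) := by
      gcongr _ * (?_ + ?_)
      · exact (rpow_mul_approxTail_rpow_le_fracMaximal hp0 (m + 1) f j x).trans
          (by gcongr; exact le_self_add)
      · exact le_mul_of_one_le_left' le_add_self
    _ = _ := by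
      rw [hK]
      ring

lemma AhlforsRegular.exists_ae_ofReal_div_infDist_rpow_le (h : AhlforsRegular μ S d a b)
    (hS : IsClosed S) (hne : S.Nonempty) (hd : (n : ℝ) - 1 < d) (hd0 : 0 < d) (hn : 0 < n)
    (hp : 1 ≤ p) (hs : 0 < s) (m : ℕ) :
    ∃ K : ℝ≥0, ∀ f : Rn n → ℝ, LocallyIntegrable f →
      (∀ᵐ w ∂μ, Tendsto (fun r : ℝ => ⨍ y in closedBall w r, f y) (𝓝[>] 0) (𝓝 0)) →
      ∀ᵐ x, ENNReal.ofReal (|f x| ^ p / infDist x S ^ (s * p)) ≤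
        K * (‖f x‖ₑ ^ p + (fracMaximal (m + 1) s f x ^ p +
          ∑' j, ENNReal.ofReal (scale j) ^ (-(s * p)) * tailMean μ d (m + 1) f j x ^ p)) := by
  have hp0 : 0 < p := by linarith
  have hsp : 0 < s * p := by positivity
  obtain ⟨A, hA⟩ := h.exists_rpow_mul_enorm_rpow_le hd hd0 hn hp hs m
  have hH0 : ENNReal.ofReal (scale 0) ≠ 0 := by simpa using scale_pos 0
  lift ENNReal.ofReal (scale 0) ^ (-(s * p)) to ℝ≥0 using by finiteness with B hB
  lift (2⁻¹ : ℝ≥0∞) ^ (-(s * p)) to ℝ≥0 using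
    ENNReal.rpow_ne_top_of_ne_zero (by simp) (by simp) with D hD
  refine ⟨B + D * A, fun f hf htr => ?_⟩
  filter_upwards [ae_tendsto_setAverage_closedBall hf] with x hx
  rcases (infDist_nonneg (x := x) (s := S)).eq_or_lt with hzero | hpos
  · simp [← hzero, Real.zero_rpow hsp.ne']
  rcases le_total (scale 0) (infDist x S) with hfar | hnear
  · refine (ofReal_rpow_div_rpow_le hp0.le hsp.le (scale_pos 0) hfar (f x)).trans ?_
    rw [← hB]
    exact mul_le_mul' (by push_cast; exact le_self_add) le_self_add
  · obtain ⟨j, hlt, hle⟩ := exists_scale_lt_le hpos hnear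
    obtain ⟨w₀, hw₀, hdist⟩ := hS.exists_infDist_eq_dist hne x
    calc ENNReal.ofReal (|f x| ^ p / infDist x S ^ (s * p))
      _ ≤ ENNReal.ofReal (scale (j + 1)) ^ (-(s * p)) * ‖f x‖ₑ ^ p :=
        ofReal_rpow_div_rpow_le hp0.le hsp.le (scale_pos _) hlt.le (f x)
      _ = D * (ENNReal.ofReal (scale j) ^ (-(s * p)) * ‖f x‖ₑ ^ p) := by
        rw [ofReal_scale_add_rpow, pow_one, hD, mul_assoc]
      _ ≤ D * (A * (fracMaximal (m + 1) s f x ^ p +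
          ENNReal.ofReal (scale j) ^ (-(s * p)) * tailMean μ d (m + 1) f j x ^ p)) := by
        gcongr _ * ?_
        exact hA f hf htr j x w₀ hw₀ (hdist ▸ hle) hx
      _ ≤ D * A * (fracMaximal (m + 1) s f x ^ p +
          ∑' j, ENNReal.ofReal (scale j) ^ (-(s * p)) * tailMean μ d (m + 1) f j x ^ p) := by
        rw [mul_assoc]
        gcongr
        exact ENNReal.le_tsum (f := fun j =>
          ENNReal.ofReal (scale j) ^ (-(s * p)) * tailMean μ d (m + 1) f j x ^ p) j
      _ ≤ _ := by
        push_cast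
        exact mul_le_mul' le_add_self le_add_self

lemma AhlforsRegular.exists_lintegral_div_infDist_rpow_le_fracMaximal
    (h : AhlforsRegular μ S d a b) (hS : IsClosed S) (hne : S.Nonempty) (hd1 : (n : ℝ) - 1 < d)
    (hd2 : d < n) (hn : 0 < n) (hp : 1 ≤ p) (hs : n - d < s * p) (m : ℕ) :
    ∃ C : ℝ≥0, ∀ f : Rn n → ℝ, LocallyIntegrable f →
      (∀ᵐ w ∂μ, Tendsto (fun r : ℝ => ⨍ y in closedBall w r, f y) (𝓝[>] 0) (𝓝 0)) →
      ∫⁻ x, ENNReal.ofReal (|f x| ^ p / infDist x S ^ (s * p)) ≤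
        C * ((∫⁻ x, ‖f x‖ₑ ^ p) + ∫⁻ x, fracMaximal (m + 1) s f x ^ p) := by
  have hs0 : 0 < s := pos_of_mul_pos_left (by linarith) (by linarith : 0 ≤ p)
  have hd0 : 0 < d := by
    have : (1 : ℝ) ≤ n := by exact_mod_cast hn
    linarith
  have := h.sigmaFinite hd0.le
  obtain ⟨K, hK⟩ := h.exists_ae_ofReal_div_infDist_rpow_le hS hne hd1 hd0 hn hp hs0 m
  obtain ⟨A, hA⟩ := h.exists_tsum_mul_lintegral_tailMean_rpow_le hd0.le hd2 hp hs
  refine ⟨K * (1 + A), fun f hf htr => ?_⟩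
  set g := fracMaximal (m + 1) s f
  set V := fun j x => ENNReal.ofReal (scale j) ^ (-(s * p)) * tailMean μ d (m + 1) f j x ^ p
  have hmean (j : ℕ) : Measurable fun x => tailMean μ d (m + 1) f j x ^ p :=
    (measurable_tailMean μ d (m + 1) f j).pow_const p
  have hg : Measurable fun x => g x ^ p := (measurable_fracMaximal (m + 1) s f).pow_const p
  have hV (j : ℕ) : Measurable (V j) := (hmean j).const_mul _
  have hgV : Measurable fun x => g x ^ p + ∑' j, V j x := hg.add (.tsum hV)
  have hVg : ∫⁻ x, ∑' j, V j x ≤ A * ∫⁻ x, g x ^ p := by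
    rw [lintegral_tsum fun j => (hV j).aemeasurable]
    exact le_of_eq_of_le (tsum_congr fun j => lintegral_const_mul _ (hmean j)) (hA (m + 1) f)
  calc ∫⁻ x, ENNReal.ofReal (|f x| ^ p / infDist x S ^ (s * p))
    _ ≤ ∫⁻ x, K * (‖f x‖ₑ ^ p + (g x ^ p + ∑' j, V j x)) := lintegral_mono_ae (hK f hf htr)
    _ = K * ((∫⁻ x, ‖f x‖ₑ ^ p) + ((∫⁻ x, g x ^ p) + ∫⁻ x, ∑' j, V j x)) := by
      rw [lintegral_const_mul' _ _ ENNReal.coe_ne_top, lintegral_add_right _ hgV,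
        lintegral_add_left hg]
    _ ≤ K * ((1 + A) * (∫⁻ x, ‖f x‖ₑ ^ p) + (1 + A) * ∫⁻ x, g x ^ p) := by
      gcongr _ * (?_ + ?_)
      · exact le_mul_of_one_le_left' le_self_add
      · rw [add_mul, one_mul]
        gcongr
    _ = _ := by
      push_cast
      ring

lemma AhlforsRegular.exists_lintegral_div_infDist_rpow_le (h : AhlforsRegular μ S d a b)
    (hS : IsClosed S) (hne : S.Nonempty) (hd1 : (n : ℝ) - 1 < d) (hd2 : d < n) (hn : 0 < n)
    {q : ℝ} (hp : 1 ≤ p) (hq : 0 < q) (hs : n - d < s * p) (m : ℕ) :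
    ∃ C : ℝ≥0, ∀ f : Rn n → ℝ, LocallyIntegrable f →
      (∀ᵐ w ∂μ, Tendsto (fun r : ℝ => ⨍ y in closedBall w r, f y) (𝓝[>] 0) (𝓝 0)) →
      ∫⁻ x, ENNReal.ofReal (|f x| ^ p / infDist x S ^ (s * p)) ≤
        C * ((∫⁻ x, ‖f x‖ₑ ^ p) + ∫⁻ x, tlFunctional (m + 1) s q f x ^ p) := by
  have hp0 : 0 ≤ p := by linarith
  have hs0 : 0 ≤ s := (pos_of_mul_pos_left (by linarith) hp0).le
  obtain ⟨A, hA⟩ :=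
    h.exists_lintegral_div_infDist_rpow_le_fracMaximal hS hne hd1 hd2 hn hp hs m
  obtain ⟨B, hB⟩ := exists_fracMaximal_le_tlFunctional n hs0 hq
  refine ⟨A * (1 + B ^ p), fun f hf htr => (hA f hf htr).trans ?_⟩
  have hgB : ∫⁻ x, fracMaximal (m + 1) s f x ^ p ≤
      B ^ p * ∫⁻ x, tlFunctional (m + 1) s q f x ^ p := by
    rw [← lintegral_const_mul' _ _ (by finiteness)]
    refine lintegral_mono fun x => ?_
    rw [← ENNReal.mul_rpow_of_nonneg _ _ hp0]
    exact ENNReal.rpow_le_rpow (hB (m + 1) f x) hp0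
  rw [ENNReal.coe_mul, ENNReal.coe_add, ENNReal.coe_one, ENNReal.coe_rpow_of_nonneg _ hp0,
    mul_assoc, mul_add (1 + _)]
  gcongr _ * (?_ + ?_)
  · exact le_mul_of_one_le_left' le_self_add
  · exact hgB.trans (by gcongr; exact le_add_self)

end HardyInequality

section TriebelLizorkin

variable {n : ℕ}

lemma IsDSet.ahlforsRegular {S : Set (Rn n)} {d C : ℝ} (hS : IsDSet S d C) :
    AhlforsRegular ((μH[d]).restrict S) S d C⁻¹.toNNReal C.toNNReal := by
  obtain ⟨hclosed, hC, hball⟩ := hS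
  have hC0 : 0 < C := by linarith
  refine ⟨by simpa using hC0, ae_restrict_mem hclosed.measurableSet, fun w hw r hr hr1 => ?_,
    fun w hw r hr hr1 => ?_⟩
  all_goals
    rw [Measure.restrict_apply isClosed_closedBall.measurableSet, ← ENNReal.ofReal,
      ENNReal.ofReal_rpow_of_pos hr, ← ENNReal.ofReal_mul (by positivity)]
  exacts [(hball w hw r hr hr1).1, (hball w hw r hr hr1).2]

lemma tlNorm_eq (s p q : ℝ) (f : Rn n → ℝ) :
    tlNorm s p q f = (∫⁻ x, ‖f x‖ₑ ^ p) ^ (1 / p) +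
      (∫⁻ x, tlFunctional (⌊s⌋₊ + 1) s q f x ^ p) ^ (1 / p) := by
  simp only [Real.enorm_eq_ofReal_abs]
  rfl

lemma locallyIntegrable_of_tlNorm_lt_top {s p q : ℝ} (hp : 1 ≤ p) {f : Rn n → ℝ}
    (hf : AEStronglyMeasurable f volume) (hnorm : tlNorm s p q f < ⊤) : LocallyIntegrable f := by
  have hp0 : 0 < p := by linarith
  rw [tlNorm_eq] at hnorm
  have hint : ∫⁻ x, ‖f x‖ₑ ^ p < ⊤ :=
    (ENNReal.rpow_lt_top_iff_of_pos (one_div_pos.2 hp0)).1 (le_self_add.trans_lt hnorm)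
  have hmem : MemLp f (ENNReal.ofReal p) := by
    refine ⟨hf, ?_⟩
    rwa [eLpNorm_lt_top_iff_lintegral_rpow_enorm_lt_top (by simpa using hp0) ENNReal.ofReal_ne_top,
      ENNReal.toReal_ofReal hp0.le]
  exact hmem.locallyIntegrable (ENNReal.one_le_ofReal.2 hp)

lemma hardyLHS_empty {s p : ℝ} (hp : 0 < p) (hs : 0 < s) (f : Rn n → ℝ) :
    hardyLHS ∅ s p f = 0 := by
  simp [hardyLHS, Real.zero_rpow (mul_pos hs hp).ne', hp]

theorem hardy_triebel_lizorkin_general (hn : 1 ≤ n) (S : Set (Rn n)) (d C₀ : ℝ)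
    (hS : IsDSet S d C₀) (hd1 : (n : ℝ) - 1 < d) (hd2 : d < n)
    (p q s : ℝ) (hp : 1 ≤ p) (hq : 0 < q) (hs : ((n : ℝ) - d) / p < s) :
    ∃ c > 0, ∀ f : Rn n → ℝ, AEStronglyMeasurable f volume → tlNorm s p q f < ⊤ →
      TraceZero S d f → hardyLHS S s p f ≤ ENNReal.ofReal c * tlNorm s p q f := by
  have hp0 : 0 < p := by linarith
  rcases S.eq_empty_or_nonempty with rfl | hne
  · have hs0 : 0 < s := (div_pos (sub_pos.2 hd2) hp0).trans hs
    exact ⟨1, one_pos, fun f _ _ _ => by simp [hardyLHS_empty hp0 hs0]⟩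
  obtain ⟨C, hC⟩ := hS.ahlforsRegular.exists_lintegral_div_infDist_rpow_le hS.1 hne hd1 hd2 hn
    hp hq ((div_lt_iff₀ hp0).1 hs) ⌊s⌋₊
  refine ⟨C ^ (1 / p) + 1, by positivity, fun f hf hnorm htr => ?_⟩
  have hCc : (C : ℝ≥0∞) ^ (1 / p) ≤ ENNReal.ofReal (C ^ (1 / p) + 1) := by
    rw [← NNReal.coe_rpow, ENNReal.ofReal_add (by positivity) zero_le_one,
      ENNReal.ofReal_coe_nnreal, ENNReal.coe_rpow_of_nonneg _ (by positivity)]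
    exact le_self_add
  rw [tlNorm_eq]
  calc hardyLHS S s p f
    _ ≤ (C * ((∫⁻ x, ‖f x‖ₑ ^ p) + ∫⁻ x, tlFunctional (⌊s⌋₊ + 1) s q f x ^ p)) ^ (1 / p) :=
      ENNReal.rpow_le_rpow (hC f (locallyIntegrable_of_tlNorm_lt_top hp hf hnorm) htr)
        (by positivity)
    _ ≤ _ := by
      rw [ENNReal.mul_rpow_of_nonneg _ _ (by positivity)]
      exact mul_le_mul' hCc
        (ENNReal.rpow_add_le_add_rpow _ _ (by positivity) ((div_le_one hp0).2 hp))

end TriebelLizorkin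

/-- **Hardy inequality for Triebel–Lizorkin spaces** (Theorem 3.9, the main result).
If `S ⊆ ℝⁿ` (`n ≥ 2`) is a `d`-set with `n−1 < d < n`, `1 < p < ∞`, `1 ≤ q < ∞`, and
`s > (n−d)/p`, then there is `c > 0` such that every `f ∈ F^s_{pq}(ℝⁿ)` with
`Tr_S f = 0` ℋᵈ-a.e. satisfies
`(∫ |f(x)|^p / dist(x,S)^{sp} dx)^{1/p} ≤ c ‖f‖_{F^s_{pq}(ℝⁿ)}`. -/
theorem hardy_triebel_lizorkin {n : ℕ} (hn : 2 ≤ n) (S : Set (Rn n)) (d C₀ : ℝ)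
    (hS : IsDSet S d C₀) (hd1 : (n : ℝ) - 1 < d) (hd2 : d < n)
    (p q s : ℝ) (hp : 1 < p) (hq : 1 ≤ q) (hs : ((n : ℝ) - d) / p < s) :
    ∃ c > 0, ∀ f : Rn n → ℝ, Measurable f → tlNorm s p q f < ⊤ →
      TraceZero S d f →
      hardyLHS S s p f ≤ ENNReal.ofReal c * tlNorm s p q f := by
  obtain ⟨c, hc, h⟩ := hardy_triebel_lizorkin_general (by lia) S d C₀ hS hd1 hd2 p q s hp.le
    (by linarith) hs
  exact ⟨c, hc, fun f hf => h f hf.aestronglyMeasurable⟩
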